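/- arXiv:1704.04288 — 17 statements merged into one kernel-verified Lean document; each statement's English description precedes it below -/
import Mathlib

section
/- A permutation π contains a separated pair if and only if π contains the pattern 231. -/
/-- `(v+1, v)` (0-based values) is a separated pair of `π`. -/
def IsSepPair {n : ℕ} (π : Equiv.Perm (Fin n)) (v : Fin n) : Prop :=
  ∃ p q r : Fin n, p < q ∧ q < r ∧
    (π p : ℕ) = (v : ℕ) + 1 ∧ (v : ℕ) + 1 < (π q : ℕ) ∧ π r = v

/-- `π` contains `σ` as a pattern. -/
def Contains {n k : ℕ} (π : Equiv.Perm (Fin n)) (σ : Equiv.Perm (Fin k)) : Prop :=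
  ∃ α : Fin k → Fin n, StrictMono α ∧ ∀ i j, π (α i) < π (α j) ↔ σ i < σ j

/-- the pattern 231 (one-line 2,3,1; 0-based values 1,2,0). -/
noncomputable def p231 : Equiv.Perm (Fin 3) :=
  Equiv.ofBijective (![1, 2, 0] : Fin 3 → Fin 3) (by decide)

theorem sep_pair_aux {n : ℕ} (π : Equiv.Perm (Fin n)) (p q : Fin n) (hpq : p < q)
    (hv : π p < π q) : ∀ (d : ℕ) (r : Fin n), q < r → (π p : ℕ) = (π r : ℕ) + 1 + d →
    ∃ v : Fin n, IsSepPair π v := by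
  intro d
  induction d with
  | zero =>
    intro r hr h
    refine ⟨π r, p, q, r, hpq, hr, by omega, ?_, rfl⟩
    have : (π p : ℕ) < π q := hv
    omega
  | succ d ih =>
    intro r hr h
    have hv' : (π p : ℕ) < π q := hv
    have hlt : (π r : ℕ) + 1 < n := by have := (π p).isLt; omega
    obtain ⟨s, hs⟩ := π.surjective ⟨(π r : ℕ) + 1, hlt⟩
    have hs' : (π s : ℕ) = (π r : ℕ) + 1 := by rw [hs]
    rcases lt_trichotomy s q with h1 | h1 | h1
    · exact ⟨π r, s, q, r, h1, hr, hs', by omega, rfl⟩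
    · subst h1; omega
    · exact ih s h1 (by omega)

/-- A permutation contains a separated pair iff it contains the pattern 231. -/
theorem sep_pair_iff_contains_231 {n : ℕ} (π : Equiv.Perm (Fin n)) :
    (∃ v : Fin n, IsSepPair π v) ↔ Contains π p231 := by
  constructor
  · rintro ⟨v, p, q, r, hpq, hqr, h1, h2, h3⟩
    subst h3
    refine ⟨![p, q, r], ?_, ?_⟩
    · intro i j hij
      have hpr := hpq.trans hqr
      fin_cases i <;> fin_cases j <;> simp_all
    · intro i j
      have a1 : π r < π p := by rw [Fin.lt_def]; omega
      have a2 : π p < π q := by rw [Fin.lt_def]; omega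
      have a3 := a1.trans a2
      fin_cases i <;> fin_cases j <;>
        simp [p231, Equiv.ofBijective_apply, a1, a2, a3, a1.le, a2.le, a3.le]
  · rintro ⟨α, hα, h⟩
    have h1 : π (α 0) < π (α 1) := (h 0 1).2 (by simp [p231])
    have h2 : π (α 2) < π (α 0) := (h 2 0).2 (by simp [p231])
    have h2' : (π (α 2) : ℕ) < π (α 0) := h2
    exact sep_pair_aux π (α 0) (α 1) (hα (by decide)) h1
      ((π (α 0) : ℕ) - (π (α 2) : ℕ) - 1) (α 2) (hα (by decide)) (by omega)
end

section
/- If a permutation σ is contained as a pattern in a permutation τ, then the number of separated pairs of σ is at most the number of separated pairs of τ, i.e. sep(σ) ≤ sep(τ). -/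
/-- number of separated pairs of `π`. -/
noncomputable def sep {n : ℕ} (π : Equiv.Perm (Fin n)) : ℕ :=
  {v : Fin n | IsSepPair π v}.ncard

/-- A separated pair of `σ` yields one of `τ` inside the corresponding interval of values. -/
theorem exists_sepPair {n k : ℕ} (τ : Equiv.Perm (Fin n)) (σ : Equiv.Perm (Fin k))
    (α : Fin k → Fin n) (hα : StrictMono α) (h : ∀ i j, τ (α i) < τ (α j) ↔ σ i < σ j)
    (v : Fin k) (hv : IsSepPair σ v) :
    ∃ w : Fin n, IsSepPair τ w ∧ ∃ p r : Fin k, (σ p : ℕ) = (v : ℕ) + 1 ∧ σ r = v ∧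
      τ (α r) ≤ w ∧ w < τ (α p) := by
  classical
  obtain ⟨p, q, r, hpq, hqr, hp, hq, hr⟩ := hv
  have hba : τ (α r) < τ (α p) := by
    rw [h, hr, Fin.lt_def]; omega
  have hac : τ (α p) < τ (α q) := by
    rw [h, Fin.lt_def]; omega
  have hex : ∃ m : ℕ, ∃ hm : m < n, (τ (α r) : ℕ) ≤ m ∧ τ.symm ⟨m, hm⟩ < α q :=
    ⟨τ (α p), (τ (α p)).2, hba.le, by simpa using hα hpq⟩
  obtain ⟨hm, hbm, hlt⟩ := Nat.find_spec hex
  have hle : Nat.find hex ≤ (τ (α p) : ℕ) :=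
    Nat.find_min' hex ⟨(τ (α p)).2, hba.le, by simpa using hα hpq⟩
  have hmin := fun m => @Nat.find_min _ _ hex m
  generalize Nat.find hex = m at *
  have hne : (τ (α r) : ℕ) ≠ m := by
    rintro rfl
    have h1 : α r < α q := by simpa using hlt
    exact lt_asymm h1 (hα hqr)
  have hw : m - 1 < n := by omega
  have hnot := hmin (m - 1) (by omega)
  have hge : α q ≤ τ.symm ⟨m - 1, hw⟩ := by
    by_contra hcon
    exact hnot ⟨hw, by omega, not_le.mp hcon⟩
  rw [Fin.lt_def] at hac
  have hgt : α q < τ.symm ⟨m - 1, hw⟩ := by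
    refine lt_of_le_of_ne hge fun he => ?_
    rw [he] at hac
    simp at hac
    omega
  refine ⟨⟨m - 1, hw⟩, ⟨τ.symm ⟨m, hm⟩, α q, τ.symm ⟨m - 1, hw⟩, hlt, hgt, ?_, ?_, ?_⟩,
    p, r, hp, hr, ?_, ?_⟩
  · simp; omega
  · simp only; omega
  · simp
  · rw [Fin.le_def]; simp only; omega
  · rw [Fin.lt_def]; simp only; omega

/-- If `σ` is contained in `τ` then `sep σ ≤ sep τ`. -/
theorem sep_le_of_contains {n k : ℕ} (τ : Equiv.Perm (Fin n)) (σ : Equiv.Perm (Fin k))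
    (h : Contains τ σ) : sep σ ≤ sep τ := by
  obtain ⟨α, hα, h⟩ := h
  have hall : ∀ v : Fin k, ∃ w : Fin n, IsSepPair σ v → IsSepPair τ w ∧ ∃ p r : Fin k,
      (σ p : ℕ) = (v : ℕ) + 1 ∧ σ r = v ∧ τ (α r) ≤ w ∧ w < τ (α p) := by
    intro v
    by_cases hv : IsSepPair σ v
    · obtain ⟨w, hw⟩ := exists_sepPair τ σ α hα h v hv
      exact ⟨w, fun _ => hw⟩
    · exact ⟨α v, fun hv' => absurd hv' hv⟩
  choose g hg using hall
  have key : ∀ v v', IsSepPair σ v → IsSepPair σ v' → v < v' → g v < g v' := by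
    intro v v' hv hv' hlt
    obtain ⟨-, p, -, hp, -, -, h1⟩ := hg v hv
    obtain ⟨-, -, r, -, hr, h2, -⟩ := hg v' hv'
    have h3 : τ (α p) ≤ τ (α r) := by
      rw [← not_lt, h, hr, Fin.lt_def]
      rw [Fin.lt_def] at hlt
      omega
    exact h1.trans_le (h3.trans h2)
  refine Set.ncard_le_ncard_of_injOn g (fun v hv => (hg v hv).1) ?_ (Set.toFinite _)
  intro v hv v' hv' he
  rcases lt_trichotomy v v' with hl | hl | hl
  · exact absurd he (key v v' hv hv' hl).ne
  · exact hl
  · exact absurd he (key v' v hv' hv hl).ne'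
end

section
/- A permutation π has at most one separated pair (equivalently, π is 2-pass sortable) if and only if π avoids all eleven patterns 24153, 24513, 24531, 34251, 35241, 42513, 42531, 45231, 261453, 231564 and 523164. -/
/- The eleven basis patterns, in one-line notation (0-based values). -/
noncomputable def p24153 : Equiv.Perm (Fin 5) :=
  Equiv.ofBijective (![1, 3, 0, 4, 2] : Fin 5 → Fin 5) (by decide)
noncomputable def p24513 : Equiv.Perm (Fin 5) :=
  Equiv.ofBijective (![1, 3, 4, 0, 2] : Fin 5 → Fin 5) (by decide)
noncomputable def p24531 : Equiv.Perm (Fin 5) :=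
  Equiv.ofBijective (![1, 3, 4, 2, 0] : Fin 5 → Fin 5) (by decide)
noncomputable def p34251 : Equiv.Perm (Fin 5) :=
  Equiv.ofBijective (![2, 3, 1, 4, 0] : Fin 5 → Fin 5) (by decide)
noncomputable def p35241 : Equiv.Perm (Fin 5) :=
  Equiv.ofBijective (![2, 4, 1, 3, 0] : Fin 5 → Fin 5) (by decide)
noncomputable def p42513 : Equiv.Perm (Fin 5) :=
  Equiv.ofBijective (![3, 1, 4, 0, 2] : Fin 5 → Fin 5) (by decide)
noncomputable def p42531 : Equiv.Perm (Fin 5) :=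
  Equiv.ofBijective (![3, 1, 4, 2, 0] : Fin 5 → Fin 5) (by decide)
noncomputable def p45231 : Equiv.Perm (Fin 5) :=
  Equiv.ofBijective (![3, 4, 1, 2, 0] : Fin 5 → Fin 5) (by decide)
noncomputable def p261453 : Equiv.Perm (Fin 6) :=
  Equiv.ofBijective (![1, 5, 0, 3, 4, 2] : Fin 6 → Fin 6) (by decide)
noncomputable def p231564 : Equiv.Perm (Fin 6) :=
  Equiv.ofBijective (![1, 2, 0, 4, 5, 3] : Fin 6 → Fin 6) (by decide)
noncomputable def p523164 : Equiv.Perm (Fin 6) :=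
  Equiv.ofBijective (![4, 1, 2, 0, 5, 3] : Fin 6 → Fin 6) (by decide)


/-- An occurrence of `231` forces a separated pair inside the value interval. -/
theorem exists_sep_of_231 {n : ℕ} (π : Equiv.Perm (Fin n)) {p q r : Fin n}
    (hpq : p < q) (hqr : q < r) (h1 : π r < π p) (h2 : π p < π q) :
    ∃ v : Fin n, IsSepPair π v ∧ π r ≤ v ∧ v < π p := by
  have key : ∀ d : ℕ, ∀ r : Fin n, q < r → π r < π p → (π p : ℕ) = (π r : ℕ) + d →
      ∃ v : Fin n, IsSepPair π v ∧ π r ≤ v ∧ v < π p := by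
    intro d
    induction d with
    | zero =>
      intro r _ h h'
      rw [Fin.lt_def] at h
      omega
    | succ d ih =>
      intro r hr h h'
      have hb : (π r : ℕ) + 1 < n := by
        have := (π p).isLt
        omega
      obtain ⟨s, hs⟩ : ∃ s, π s = ⟨(π r : ℕ) + 1, hb⟩ := π.surjective _
      have hs' : (π s : ℕ) = (π r : ℕ) + 1 := by rw [hs]
      rw [Fin.lt_def] at h h2
      rcases lt_trichotomy s q with hsq | hsq | hsq
      · exact ⟨π r, ⟨s, q, r, hsq, hr, hs', by omega, rfl⟩, le_refl _, h⟩
      · subst hsq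
        omega
      · have hne : s ≠ p := by
          rintro rfl
          exact absurd hsq (not_lt.mpr hpq.le)
        have hne' : (π s : ℕ) ≠ (π p : ℕ) := fun e => hne (π.injective (Fin.ext e))
        obtain ⟨v, hv, hv1, hv2⟩ := ih s hsq (by rw [Fin.lt_def]; omega) (by omega)
        refine ⟨v, hv, ?_, hv2⟩
        rw [Fin.le_def] at hv1 ⊢
        omega
  refine key ((π p : ℕ) - (π r : ℕ)) r hqr h1 ?_
  rw [Fin.lt_def] at h1
  omega

/-- Two occurrences of `231` with disjoint value intervals force two separated pairs. -/
theorem one_lt_sep {n : ℕ} (π : Equiv.Perm (Fin n)) {p q r p' q' r' : Fin n}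
    (hpq : p < q) (hqr : q < r) (h1 : π r < π p) (h2 : π p < π q)
    (hpq' : p' < q') (hqr' : q' < r') (h1' : π r' < π p') (h2' : π p' < π q')
    (hd : π p ≤ π r') : ¬ sep π ≤ 1 := by
  obtain ⟨v, hv, _, hv2⟩ := exists_sep_of_231 π hpq hqr h1 h2
  obtain ⟨w, hw, hw1, _⟩ := exists_sep_of_231 π hpq' hqr' h1' h2'
  have hvw : v < w := lt_of_lt_of_le hv2 (hd.trans hw1)
  rw [not_le, sep, Set.one_lt_ncard]
  exact ⟨v, hv, w, hw, hvw.ne⟩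

theorem contains_mk {n k : ℕ} (π : Equiv.Perm (Fin n)) (σ : Equiv.Perm (Fin k))
    (α : Fin k → Fin n) (hα : StrictMono α)
    (h : ∀ i j, σ i < σ j → π (α i) < π (α j)) : Contains π σ := by
  refine ⟨α, hα, fun i j => ⟨fun hij => ?_, h i j⟩⟩
  rcases lt_trichotomy (σ i) (σ j) with h' | h' | h'
  · exact h'
  · rw [σ.injective h'] at hij
    exact absurd hij (lt_irrefl _)
  · exact absurd hij (not_lt.mpr (h j i h').le)

theorem mk24153 {n : ℕ} (π : Equiv.Perm (Fin n)) {a b c d e : Fin n}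
    (h0 : a < b) (h1 : b < c) (h2 : c < d) (h3 : d < e)
    (k0 : π c < π a) (k1 : π a < π e) (k2 : π e < π b) (k3 : π b < π d) :
    Contains π p24153 := by
  refine contains_mk π _ ![a, b, c, d, e] ?_ ?_
  · rw [Fin.strictMono_iff_lt_succ]
    intro i
    fin_cases i <;> simp <;> assumption
  · intro i j
    fin_cases i <;> fin_cases j <;> simp [p24153] <;> order

theorem no24153 {n : ℕ} (π : Equiv.Perm (Fin n)) (hs : sep π ≤ 1) : ¬ Contains π p24153 := by
  rintro ⟨α, hα, h⟩
  exact one_lt_sep π (hα (by decide : (0 : Fin 5) < 1)) (hα (by decide : (1 : Fin 5) < 2))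
    ((h 2 0).mpr (by simp [p24153])) ((h 0 1).mpr (by simp [p24153]))
    (hα (by decide : (1 : Fin 5) < 3)) (hα (by decide : (3 : Fin 5) < 4))
    ((h 4 1).mpr (by simp [p24153])) ((h 1 3).mpr (by simp [p24153]))
    ((h 0 4).mpr (by simp [p24153])).le hs

theorem mk24513 {n : ℕ} (π : Equiv.Perm (Fin n)) {a b c d e : Fin n}
    (h0 : a < b) (h1 : b < c) (h2 : c < d) (h3 : d < e)
    (k0 : π d < π a) (k1 : π a < π e) (k2 : π e < π b) (k3 : π b < π c) :
    Contains π p24513 := by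
  refine contains_mk π _ ![a, b, c, d, e] ?_ ?_
  · rw [Fin.strictMono_iff_lt_succ]
    intro i
    fin_cases i <;> simp <;> assumption
  · intro i j
    fin_cases i <;> fin_cases j <;> simp [p24513] <;> order

theorem no24513 {n : ℕ} (π : Equiv.Perm (Fin n)) (hs : sep π ≤ 1) : ¬ Contains π p24513 := by
  rintro ⟨α, hα, h⟩
  exact one_lt_sep π (hα (by decide : (0 : Fin 5) < 1)) (hα (by decide : (1 : Fin 5) < 3))
    ((h 3 0).mpr (by simp [p24513])) ((h 0 1).mpr (by simp [p24513]))
    (hα (by decide : (1 : Fin 5) < 2)) (hα (by decide : (2 : Fin 5) < 4))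
    ((h 4 1).mpr (by simp [p24513])) ((h 1 2).mpr (by simp [p24513]))
    ((h 0 4).mpr (by simp [p24513])).le hs

theorem mk24531 {n : ℕ} (π : Equiv.Perm (Fin n)) {a b c d e : Fin n}
    (h0 : a < b) (h1 : b < c) (h2 : c < d) (h3 : d < e)
    (k0 : π e < π a) (k1 : π a < π d) (k2 : π d < π b) (k3 : π b < π c) :
    Contains π p24531 := by
  refine contains_mk π _ ![a, b, c, d, e] ?_ ?_
  · rw [Fin.strictMono_iff_lt_succ]
    intro i
    fin_cases i <;> simp <;> assumption
  · intro i j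
    fin_cases i <;> fin_cases j <;> simp [p24531] <;> order

theorem no24531 {n : ℕ} (π : Equiv.Perm (Fin n)) (hs : sep π ≤ 1) : ¬ Contains π p24531 := by
  rintro ⟨α, hα, h⟩
  exact one_lt_sep π (hα (by decide : (0 : Fin 5) < 1)) (hα (by decide : (1 : Fin 5) < 4))
    ((h 4 0).mpr (by simp [p24531])) ((h 0 1).mpr (by simp [p24531]))
    (hα (by decide : (1 : Fin 5) < 2)) (hα (by decide : (2 : Fin 5) < 3))
    ((h 3 1).mpr (by simp [p24531])) ((h 1 2).mpr (by simp [p24531]))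
    ((h 0 3).mpr (by simp [p24531])).le hs

theorem mk34251 {n : ℕ} (π : Equiv.Perm (Fin n)) {a b c d e : Fin n}
    (h0 : a < b) (h1 : b < c) (h2 : c < d) (h3 : d < e)
    (k0 : π e < π c) (k1 : π c < π a) (k2 : π a < π b) (k3 : π b < π d) :
    Contains π p34251 := by
  refine contains_mk π _ ![a, b, c, d, e] ?_ ?_
  · rw [Fin.strictMono_iff_lt_succ]
    intro i
    fin_cases i <;> simp <;> assumption
  · intro i j
    fin_cases i <;> fin_cases j <;> simp [p34251] <;> order

theorem no34251 {n : ℕ} (π : Equiv.Perm (Fin n)) (hs : sep π ≤ 1) : ¬ Contains π p34251 := by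
  rintro ⟨α, hα, h⟩
  exact one_lt_sep π (hα (by decide : (2 : Fin 5) < 3)) (hα (by decide : (3 : Fin 5) < 4))
    ((h 4 2).mpr (by simp [p34251])) ((h 2 3).mpr (by simp [p34251]))
    (hα (by decide : (0 : Fin 5) < 1)) (hα (by decide : (1 : Fin 5) < 2))
    ((h 2 0).mpr (by simp [p34251])) ((h 0 1).mpr (by simp [p34251]))
    le_rfl hs

theorem mk35241 {n : ℕ} (π : Equiv.Perm (Fin n)) {a b c d e : Fin n}
    (h0 : a < b) (h1 : b < c) (h2 : c < d) (h3 : d < e)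
    (k0 : π e < π c) (k1 : π c < π a) (k2 : π a < π d) (k3 : π d < π b) :
    Contains π p35241 := by
  refine contains_mk π _ ![a, b, c, d, e] ?_ ?_
  · rw [Fin.strictMono_iff_lt_succ]
    intro i
    fin_cases i <;> simp <;> assumption
  · intro i j
    fin_cases i <;> fin_cases j <;> simp [p35241] <;> order

theorem no35241 {n : ℕ} (π : Equiv.Perm (Fin n)) (hs : sep π ≤ 1) : ¬ Contains π p35241 := by
  rintro ⟨α, hα, h⟩
  exact one_lt_sep π (hα (by decide : (2 : Fin 5) < 3)) (hα (by decide : (3 : Fin 5) < 4))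
    ((h 4 2).mpr (by simp [p35241])) ((h 2 3).mpr (by simp [p35241]))
    (hα (by decide : (0 : Fin 5) < 1)) (hα (by decide : (1 : Fin 5) < 2))
    ((h 2 0).mpr (by simp [p35241])) ((h 0 1).mpr (by simp [p35241]))
    le_rfl hs

theorem mk42513 {n : ℕ} (π : Equiv.Perm (Fin n)) {a b c d e : Fin n}
    (h0 : a < b) (h1 : b < c) (h2 : c < d) (h3 : d < e)
    (k0 : π d < π b) (k1 : π b < π e) (k2 : π e < π a) (k3 : π a < π c) :
    Contains π p42513 := by
  refine contains_mk π _ ![a, b, c, d, e] ?_ ?_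
  · rw [Fin.strictMono_iff_lt_succ]
    intro i
    fin_cases i <;> simp <;> assumption
  · intro i j
    fin_cases i <;> fin_cases j <;> simp [p42513] <;> order

theorem no42513 {n : ℕ} (π : Equiv.Perm (Fin n)) (hs : sep π ≤ 1) : ¬ Contains π p42513 := by
  rintro ⟨α, hα, h⟩
  exact one_lt_sep π (hα (by decide : (1 : Fin 5) < 2)) (hα (by decide : (2 : Fin 5) < 3))
    ((h 3 1).mpr (by simp [p42513])) ((h 1 2).mpr (by simp [p42513]))
    (hα (by decide : (0 : Fin 5) < 2)) (hα (by decide : (2 : Fin 5) < 4))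
    ((h 4 0).mpr (by simp [p42513])) ((h 0 2).mpr (by simp [p42513]))
    ((h 1 4).mpr (by simp [p42513])).le hs

theorem mk42531 {n : ℕ} (π : Equiv.Perm (Fin n)) {a b c d e : Fin n}
    (h0 : a < b) (h1 : b < c) (h2 : c < d) (h3 : d < e)
    (k0 : π e < π b) (k1 : π b < π d) (k2 : π d < π a) (k3 : π a < π c) :
    Contains π p42531 := by
  refine contains_mk π _ ![a, b, c, d, e] ?_ ?_
  · rw [Fin.strictMono_iff_lt_succ]
    intro i
    fin_cases i <;> simp <;> assumption
  · intro i j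
    fin_cases i <;> fin_cases j <;> simp [p42531] <;> order

theorem no42531 {n : ℕ} (π : Equiv.Perm (Fin n)) (hs : sep π ≤ 1) : ¬ Contains π p42531 := by
  rintro ⟨α, hα, h⟩
  exact one_lt_sep π (hα (by decide : (1 : Fin 5) < 2)) (hα (by decide : (2 : Fin 5) < 4))
    ((h 4 1).mpr (by simp [p42531])) ((h 1 2).mpr (by simp [p42531]))
    (hα (by decide : (0 : Fin 5) < 2)) (hα (by decide : (2 : Fin 5) < 3))
    ((h 3 0).mpr (by simp [p42531])) ((h 0 2).mpr (by simp [p42531]))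
    ((h 1 3).mpr (by simp [p42531])).le hs

theorem mk45231 {n : ℕ} (π : Equiv.Perm (Fin n)) {a b c d e : Fin n}
    (h0 : a < b) (h1 : b < c) (h2 : c < d) (h3 : d < e)
    (k0 : π e < π c) (k1 : π c < π d) (k2 : π d < π a) (k3 : π a < π b) :
    Contains π p45231 := by
  refine contains_mk π _ ![a, b, c, d, e] ?_ ?_
  · rw [Fin.strictMono_iff_lt_succ]
    intro i
    fin_cases i <;> simp <;> assumption
  · intro i j
    fin_cases i <;> fin_cases j <;> simp [p45231] <;> order

theorem no45231 {n : ℕ} (π : Equiv.Perm (Fin n)) (hs : sep π ≤ 1) : ¬ Contains π p45231 := by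
  rintro ⟨α, hα, h⟩
  exact one_lt_sep π (hα (by decide : (2 : Fin 5) < 3)) (hα (by decide : (3 : Fin 5) < 4))
    ((h 4 2).mpr (by simp [p45231])) ((h 2 3).mpr (by simp [p45231]))
    (hα (by decide : (0 : Fin 5) < 1)) (hα (by decide : (1 : Fin 5) < 2))
    ((h 2 0).mpr (by simp [p45231])) ((h 0 1).mpr (by simp [p45231]))
    le_rfl hs

theorem mk261453 {n : ℕ} (π : Equiv.Perm (Fin n)) {a b c d e f : Fin n}
    (h0 : a < b) (h1 : b < c) (h2 : c < d) (h3 : d < e) (h4 : e < f)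
    (k0 : π c < π a) (k1 : π a < π f) (k2 : π f < π d) (k3 : π d < π e) (k4 : π e < π b) :
    Contains π p261453 := by
  refine contains_mk π _ ![a, b, c, d, e, f] ?_ ?_
  · rw [Fin.strictMono_iff_lt_succ]
    intro i
    fin_cases i <;> simp <;> assumption
  · intro i j
    fin_cases i <;> fin_cases j <;> simp [p261453] <;> order

theorem no261453 {n : ℕ} (π : Equiv.Perm (Fin n)) (hs : sep π ≤ 1) : ¬ Contains π p261453 := by
  rintro ⟨α, hα, h⟩
  exact one_lt_sep π (hα (by decide : (0 : Fin 6) < 1)) (hα (by decide : (1 : Fin 6) < 2))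
    ((h 2 0).mpr (by simp [p261453])) ((h 0 1).mpr (by simp [p261453]))
    (hα (by decide : (3 : Fin 6) < 4)) (hα (by decide : (4 : Fin 6) < 5))
    ((h 5 3).mpr (by simp [p261453])) ((h 3 4).mpr (by simp [p261453]))
    ((h 0 5).mpr (by simp [p261453])).le hs

theorem mk231564 {n : ℕ} (π : Equiv.Perm (Fin n)) {a b c d e f : Fin n}
    (h0 : a < b) (h1 : b < c) (h2 : c < d) (h3 : d < e) (h4 : e < f)
    (k0 : π c < π a) (k1 : π a < π b) (k2 : π b < π f) (k3 : π f < π d) (k4 : π d < π e) :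
    Contains π p231564 := by
  refine contains_mk π _ ![a, b, c, d, e, f] ?_ ?_
  · rw [Fin.strictMono_iff_lt_succ]
    intro i
    fin_cases i <;> simp <;> assumption
  · intro i j
    fin_cases i <;> fin_cases j <;> simp [p231564] <;> order

theorem no231564 {n : ℕ} (π : Equiv.Perm (Fin n)) (hs : sep π ≤ 1) : ¬ Contains π p231564 := by
  rintro ⟨α, hα, h⟩
  exact one_lt_sep π (hα (by decide : (0 : Fin 6) < 1)) (hα (by decide : (1 : Fin 6) < 2))
    ((h 2 0).mpr (by simp [p231564])) ((h 0 1).mpr (by simp [p231564]))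
    (hα (by decide : (3 : Fin 6) < 4)) (hα (by decide : (4 : Fin 6) < 5))
    ((h 5 3).mpr (by simp [p231564])) ((h 3 4).mpr (by simp [p231564]))
    ((h 0 5).mpr (by simp [p231564])).le hs

theorem mk523164 {n : ℕ} (π : Equiv.Perm (Fin n)) {a b c d e f : Fin n}
    (h0 : a < b) (h1 : b < c) (h2 : c < d) (h3 : d < e) (h4 : e < f)
    (k0 : π d < π b) (k1 : π b < π c) (k2 : π c < π f) (k3 : π f < π a) (k4 : π a < π e) :
    Contains π p523164 := by
  refine contains_mk π _ ![a, b, c, d, e, f] ?_ ?_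
  · rw [Fin.strictMono_iff_lt_succ]
    intro i
    fin_cases i <;> simp <;> assumption
  · intro i j
    fin_cases i <;> fin_cases j <;> simp [p523164] <;> order

theorem no523164 {n : ℕ} (π : Equiv.Perm (Fin n)) (hs : sep π ≤ 1) : ¬ Contains π p523164 := by
  rintro ⟨α, hα, h⟩
  exact one_lt_sep π (hα (by decide : (1 : Fin 6) < 2)) (hα (by decide : (2 : Fin 6) < 3))
    ((h 3 1).mpr (by simp [p523164])) ((h 1 2).mpr (by simp [p523164]))
    (hα (by decide : (0 : Fin 6) < 4)) (hα (by decide : (4 : Fin 6) < 5))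
    ((h 5 0).mpr (by simp [p523164])) ((h 0 4).mpr (by simp [p523164]))
    ((h 1 5).mpr (by simp [p523164])).le hs

theorem sep_le_one_of_avoids {n : ℕ} (π : Equiv.Perm (Fin n))
    (n24153 : ¬ Contains π p24153)
    (n24513 : ¬ Contains π p24513)
    (n24531 : ¬ Contains π p24531)
    (n34251 : ¬ Contains π p34251)
    (n35241 : ¬ Contains π p35241)
    (n42513 : ¬ Contains π p42513)
    (n42531 : ¬ Contains π p42531)
    (n45231 : ¬ Contains π p45231)
    (n261453 : ¬ Contains π p261453)
    (n231564 : ¬ Contains π p231564)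
    (n523164 : ¬ Contains π p523164)
    : sep π ≤ 1 := by
  by_contra hs
  rw [not_le, sep, Set.one_lt_ncard] at hs
  obtain ⟨v₀, hv₀, w₀, hw₀, hne⟩ := hs
  obtain ⟨v, w, hv, hw, hvw⟩ : ∃ v w, IsSepPair π v ∧ IsSepPair π w ∧ v < w := by
    rcases lt_or_gt_of_ne hne with h | h
    · exact ⟨v₀, w₀, hv₀, hw₀, h⟩
    · exact ⟨w₀, v₀, hw₀, hv₀, h⟩
  clear hne hv₀ hw₀
  -- `b = v+1`, `x` the separator, `a = v`; `d = w+1`, `y` the separator, `c = w`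
  obtain ⟨b, x, a, hbx, hxa, eb, ex, ea⟩ := hv
  obtain ⟨d, y, c, hdy, hyc, ed, ey, ec⟩ := hw
  subst ea ec
  have neq : ∀ i j : Fin n, i < j → (π i : ℕ) ≠ (π j : ℕ) :=
    fun i j hij e => hij.ne (π.injective (Fin.ext e))
  have peq : ∀ i j : Fin n, (π i : ℕ) = (π j : ℕ) → i = j :=
    fun i j e => π.injective (Fin.ext e)
  have hab : π a < π b := by rw [Fin.lt_def]; omega
  have hcd : π c < π d := by rw [Fin.lt_def]; omega
  have hbX : π b < π x := by rw [Fin.lt_def]; omega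
  have hdY : π d < π y := by rw [Fin.lt_def]; omega
  rw [Fin.lt_def] at hvw
  by_cases hadj : (π c : ℕ) = (π a : ℕ) + 1
  · -- adjacent pairs
    obtain rfl : c = b := peq _ _ (by omega)
    have hdx : π d < π x := by
      have : (π d : ℕ) ≠ π x := neq _ _ (by order)
      rw [Fin.lt_def]; omega
    rcases lt_trichotomy (π x) (π y) with h | h | h
    · exact n35241 (mk35241 π hdy hyc hbx hxa hab hcd hdx h)
    · exact absurd (π.injective h) (by order)
    · exact n34251 (mk34251 π hdy hyc hbx hxa hab hcd hdY h)
  have hbc : π b < π c := by rw [Fin.lt_def]; omega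
  -- position of `x` in value relative to `c, d`
  have hX : x = c ∨ x = d ∨ π x < π c ∨ π d < π x := by
    by_cases h1 : x = c
    · exact Or.inl h1
    by_cases h2 : x = d
    · exact Or.inr (Or.inl h2)
    have h1' : (π x : ℕ) ≠ π c := fun e => h1 (peq _ _ e)
    have h2' : (π x : ℕ) ≠ π d := fun e => h2 (peq _ _ e)
    rw [Fin.lt_def, Fin.lt_def]
    omega
  have dne : ∀ {i j : Fin n}, π i < π j → i ≠ j := by
    rintro i j h rfl
    exact lt_irrefl _ h
  have nda : d ≠ a := (dne (by order)).symm
  have ndb : d ≠ b := (dne (by order)).symm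
  have nca : c ≠ a := (dne (by order)).symm
  have ncb : c ≠ b := (dne (by order)).symm
  have nya : y ≠ a := (dne (by order)).symm
  have nyb : y ≠ b := (dne (by order)).symm
  rcases lt_or_gt_of_ne ndb with hdb | hbd
  · rcases lt_or_gt_of_ne nya with hya | hay
    · rcases lt_or_gt_of_ne nyb with hyb | hby
      · rcases lt_or_gt_of_ne ncb with hcb | hbc'
        · rcases hX with rfl | rfl | hX | hX
          · order
          · order
          · exact n45231 (mk45231 π hdy (by order : y < b) hbx hxa
              hab hbX (by order) hdY)
          · rcases lt_trichotomy (π x) (π y) with h | h | h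
            · exact n35241 (mk35241 π hdy hyc (by order : c < x) hxa (by order) hcd hX h)
            · exact absurd (π.injective h) (by order)
            · exact n34251 (mk34251 π hdy hyc (by order : c < x) hxa (by order) hcd hdY h)
        · rcases lt_or_gt_of_ne nca with hca | hac
          · exact n45231 (mk45231 π hdy hyb hbc' hca hab hbc hcd hdY)
          · rcases hX with rfl | rfl | hX | hX
            · order
            · order
            · exact n45231 (mk45231 π hdy hyb hbx hxa hab hbX (by order) hdY)
            · exact n42513 (mk42513 π hdb hbx hxa hac hab hbc hcd hX)
      · rcases lt_or_gt_of_ne nca with hca | hac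
        · exact n42531 (mk42531 π hdb hby hyc hca hab hbc hcd hdY)
        · exact n42513 (mk42513 π hdb hby hya hac hab hbc hcd hdY)
    · rcases hX with rfl | rfl | hX | hX
      · order
      · order
      · exact n523164 (mk523164 π hdb hbx hxa hay hyc hab hbX hX hcd hdY)
      · exact n42513 (mk42513 π hdb hbx hxa (by order) hab hbc hcd hX)
  · rcases lt_or_gt_of_ne nda with hda | had
    · rcases lt_or_gt_of_ne nya with hya | hay
      · rcases lt_or_gt_of_ne nca with hca | hac
        · exact n24531 (mk24531 π hbd hdy hyc hca hab hbc hcd hdY)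
        · exact n24513 (mk24513 π hbd hdy hya hac hab hbc hcd hdY)
      · exact n24153 (mk24153 π hbd hda hay hyc hab hbc hcd hdY)
    · rcases hX with rfl | rfl | hX | hX
      · order
      · order
      · exact n231564 (mk231564 π hbx hxa had hdy hyc hab hbX hX hcd hdY)
      · rcases lt_trichotomy (π x) (π y) with h | h | h
        · exact n24153 (mk24153 π hbx hxa (by order) hyc hab hbc (by order) h)
        · exact absurd (π.injective h) (by order)
        · exact n261453 (mk261453 π hbx hxa had hdy hyc hab hbc hcd hdY h)

/-- `π` is 2-pass sortable (has at most one separated pair) iff it avoids the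
eleven listed patterns. -/
theorem two_pass_sortable_iff {n : ℕ} (π : Equiv.Perm (Fin n)) :
    sep π ≤ 1 ↔
      ¬ Contains π p24153 ∧ ¬ Contains π p24513 ∧ ¬ Contains π p24531 ∧
      ¬ Contains π p34251 ∧ ¬ Contains π p35241 ∧ ¬ Contains π p42513 ∧
      ¬ Contains π p42531 ∧ ¬ Contains π p45231 ∧ ¬ Contains π p261453 ∧
      ¬ Contains π p231564 ∧ ¬ Contains π p523164 := by
  constructor
  · intro h
    exact ⟨no24153 π h, no24513 π h, no24531 π h, no34251 π h, no35241 π h, no42513 π h, no42531 π h, no45231 π h, no261453 π h, no231564 π h, no523164 π h⟩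
  · rintro ⟨h1, h2, h3, h4, h5, h6, h7, h8, h9, h10, h11⟩
    exact sep_le_one_of_avoids π h1 h2 h3 h4 h5 h6 h7 h8 h9 h10 h11
end

section
/- Fix an integer t ≥ 0. If σ is a permutation with sep(σ) > t such that every permutation of strictly smaller length contained in σ as a pattern has at most t separated pairs, then the length of σ is at most 3(t + 1). -/
/-- A basis element for the class of permutations with at most `t` separated
pairs has length at most `3(t+1)`. -/
theorem basis_length_le (t : ℕ) {n : ℕ} (σ : Equiv.Perm (Fin n))
    (h1 : sep σ > t)
    (h2 : ∀ m : ℕ, m < n → ∀ ρ : Equiv.Perm (Fin m), Contains σ ρ → sep ρ ≤ t) :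
    n ≤ 3 * (t + 1) := by
  classical
  by_contra hn
  -- choose `t+1` separated pairs
  obtain ⟨V, hV, hVc⟩ := Set.exists_subset_card_eq (s := {v : Fin n | IsSepPair σ v})
    (n := t + 1) h1
  have hsep : ∀ v : V, IsSepPair σ v := fun v => hV v.2
  choose p q r hpq hqr hp hq hr using hsep
  -- the set of retained positions
  let S : Finset (Fin n) :=
    (Finset.univ : Finset V).biUnion (fun v => {p v, q v, r v})
  have hpS : ∀ v, p v ∈ S := fun v => by simp only [S, Finset.mem_biUnion]; exact ⟨v, by simp⟩
  have hqS : ∀ v, q v ∈ S := fun v => by simp only [S, Finset.mem_biUnion]; exact ⟨v, by simp⟩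
  have hrS : ∀ v, r v ∈ S := fun v => by simp only [S, Finset.mem_biUnion]; exact ⟨v, by simp⟩
  have hVcard : Fintype.card V = t + 1 := by
    rw [← hVc, Set.ncard_eq_toFinset_card', Set.toFinset_card]
  have hScard : S.card ≤ 3 * (t + 1) := by
    have : S.card ≤ (Finset.univ : Finset V).card * 3 :=
      Finset.card_biUnion_le_card_mul _ _ _ (fun v _ => Finset.card_le_three)
    rw [Finset.card_univ, hVcard] at this
    omega
  let T : Finset (Fin n) := S.map σ.toEmbedding
  have hT : T.card = S.card := Finset.card_map _
  let eS := S.orderIsoOfFin rfl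
  let eT := T.orderIsoOfFin hT
  let e : S ≃ T := σ.subtypeEquiv (fun a => by simp [T])
  let ρ : Equiv.Perm (Fin S.card) := (eS.toEquiv.trans e).trans eT.symm.toEquiv
  have hρ : ∀ x (hx : x ∈ S), ρ (eS.symm ⟨x, hx⟩) = eT.symm (e ⟨x, hx⟩) := by
    intro x hx
    simp [ρ]
  have hle := h2 S.card (by omega) ρ
    ⟨fun i => eS i, fun i j hij => eS.strictMono hij, fun i j => by
      have : ρ i < ρ j ↔ e (eS i) < e (eS j) := eT.symm.lt_iff_lt
      rw [this]; rfl⟩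
  let g : V → Fin S.card := fun v => eT.symm (e ⟨r v, hrS v⟩)
  have hg : Function.Injective g := by
    intro v w h
    have h' : r v = r w := congrArg Subtype.val (e.injective (eT.symm.injective h))
    exact Subtype.ext ((hr v).symm.trans ((congrArg σ h').trans (hr w)))
  have hsub : Set.range g ⊆ {v | IsSepPair ρ v} := by
    rintro _ ⟨v, rfl⟩
    have hrv : ((σ (r v) : Fin n) : ℕ) = (v : Fin n) := by rw [hr v]
    have key : ((eT.symm (e ⟨p v, hpS v⟩) : Fin _) : ℕ) = (g v : ℕ) + 1 := by
      have hlt : g v < eT.symm (e ⟨p v, hpS v⟩) := by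
        apply eT.symm.strictMono
        change σ (r v) < σ (p v)
        rw [Fin.lt_def, hp v, hrv]; omega
      by_contra hne
      have hlt' : (g v : ℕ) + 1 < (eT.symm (e ⟨p v, hpS v⟩) : Fin _) := by
        rw [Fin.lt_def] at hlt; omega
      let k : Fin S.card := ⟨(g v : ℕ) + 1, hlt'.trans (Fin.is_lt _)⟩
      have a1 : g v < k := by rw [Fin.lt_def]; simp [k]
      have a2 : k < eT.symm (e ⟨p v, hpS v⟩) := hlt'
      have b1 : e ⟨r v, hrS v⟩ < eT k := (eT.symm_apply_lt).1 a1
      have b2 : eT k < e ⟨p v, hpS v⟩ := (eT.lt_symm_apply).1 a2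
      have c1 : σ (r v) < (eT k : Fin n) := b1
      have c2 : (eT k : Fin n) < σ (p v) := b2
      rw [Fin.lt_def] at c1 c2
      have := hp v
      omega
    refine ⟨eS.symm ⟨p v, hpS v⟩, eS.symm ⟨q v, hqS v⟩, eS.symm ⟨r v, hrS v⟩,
      eS.symm.strictMono (hpq v), eS.symm.strictMono (hqr v), ?_, ?_, ?_⟩
    · rw [hρ]; exact key
    · rw [hρ, ← key]
      have : eT.symm (e ⟨p v, hpS v⟩) < eT.symm (e ⟨q v, hqS v⟩) := by
        apply eT.symm.strictMono
        change σ (p v) < σ (q v)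
        rw [Fin.lt_def, hp v]; exact hq v
      exact this
    · rw [hρ]
  have h3 : (Set.range g).ncard ≤ sep ρ := Set.ncard_le_ncard hsub (Set.toFinite _)
  rw [← Set.image_univ, Set.ncard_image_of_injective _ hg, Set.ncard_univ,
    Nat.card_eq_fintype_card, hVcard] at h3
  omega
end

section
/- For every positive integer n there exists a permutation of length n with at least ⌊(n−1)/2⌋ separated pairs; that is, τ(n) ≥ ⌊(n−1)/2⌋. -/
/-- `tau n` is the maximum of `sep` over all permutations of length `n`. -/
noncomputable def tau (n : ℕ) : ℕ :=
  Finset.univ.sup fun π : Equiv.Perm (Fin n) => sep π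

/-- one-line notation `1, 3, …, 2m-1, n-1, 0, 2, …` with `m = (n-1)/2`. -/
def oddEven (n : ℕ) (p : Fin n) : Fin n :=
  ⟨if (p : ℕ) < (n - 1) / 2 then 2 * p + 1
    else if (p : ℕ) = (n - 1) / 2 then n - 1 else 2 * (p - (n - 1) / 2 - 1), by
    have := p.isLt
    split_ifs <;> omega⟩

theorem oddEven_injective (n : ℕ) : Function.Injective (oddEven n) := by
  intro a b h
  have h' := congrArg Fin.val h
  have := a.isLt
  have := b.isLt
  simp only [oddEven] at h'
  apply Fin.ext
  split_ifs at h' <;> omega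

/-- For every positive `n`, some permutation of length `n` has at least
`⌊(n-1)/2⌋` separated pairs. -/
theorem tau_ge_half (n : ℕ) (hn : 1 ≤ n) : (n - 1) / 2 ≤ tau n := by
  let π : Equiv.Perm (Fin n) :=
    Equiv.ofBijective (oddEven n) (Finite.injective_iff_bijective.mp (oddEven_injective n))
  refine le_trans ?_ (Finset.le_sup (f := fun π : Equiv.Perm (Fin n) => sep π)
    (Finset.mem_univ π))
  let g : Fin ((n - 1) / 2) → Fin n := fun j => ⟨2 * j, by have := j.isLt; omega⟩
  have hg : Function.Injective g := by
    intro a b h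
    have h' : 2 * (a : ℕ) = 2 * b := congrArg Fin.val h
    apply Fin.ext
    omega
  have hc : (Set.range g).ncard = (n - 1) / 2 := by
    rw [← Set.image_univ, Set.ncard_image_of_injective _ hg, Set.ncard_univ, Nat.card_fin]
  rw [← hc]
  refine Set.ncard_le_ncard ?_ (Set.toFinite _)
  rintro _ ⟨j, rfl⟩
  have hj := j.isLt
  refine ⟨⟨j, by omega⟩, ⟨(n - 1) / 2, by omega⟩, ⟨j + (n - 1) / 2 + 1, by omega⟩, ?_, ?_, ?_, ?_, ?_⟩
  · exact hj
  · simp only [Fin.mk_lt_mk]; omega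
  · simp [π, g, oddEven]
  · simp [π, g, oddEven]; omega
  · apply Fin.ext
    simp only [π, g, oddEven, Equiv.ofBijective_apply]
    split_ifs <;> omega
end

section
/- For every integer k ≥ 1, the maximum number of separated pairs among permutations of length 2k+1 satisfies τ(2k+1) = k + τ(k). -/
open Classical in
/-- Separated pairs as a finset of naturals. -/
noncomputable def sepN {n : ℕ} (π : Equiv.Perm (Fin n)) : Finset ℕ :=
  (Finset.univ.filter fun v : Fin n => IsSepPair π v).map Fin.valEmbedding

lemma sep_eq {n : ℕ} (π : Equiv.Perm (Fin n)) : sep π = (sepN π).card := by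
  classical
  rw [sepN, Finset.card_map, sep, ← Set.ncard_coe_finset]
  simp

lemma mem_sepN {n : ℕ} (π : Equiv.Perm (Fin n)) (v : ℕ) : v ∈ sepN π ↔
    ∃ p q r : Fin n, p < q ∧ q < r ∧ (π p : ℕ) = v + 1 ∧ v + 1 < (π q : ℕ) ∧ (π r : ℕ) = v := by
  classical
  simp only [sepN, Finset.mem_map, Finset.mem_filter, Finset.mem_univ, true_and]
  unfold IsSepPair
  constructor
  · rintro ⟨w, ⟨p, q, r, h1, h2, h3, h4, h5⟩, rfl⟩
    exact ⟨p, q, r, h1, h2, h3, h4, by simp [h5]⟩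
  · rintro ⟨p, q, r, h1, h2, h3, h4, h5⟩
    exact ⟨π r, ⟨p, q, r, h1, h2, by omega, by omega, rfl⟩, h5⟩

lemma sep_le_tau {n : ℕ} (π : Equiv.Perm (Fin n)) : sep π ≤ tau n :=
  Finset.le_sup (f := fun π : Equiv.Perm (Fin n) => sep π) (Finset.mem_univ π)

lemma lower (k : ℕ) (σ : Equiv.Perm (Fin k)) : k + sep σ ≤ tau (2 * k + 1) := by
  classical
  let f : Fin (2 * k + 1) → Fin (2 * k + 1) := fun i =>
    if h : i.val % 2 = 0 then ⟨k - i.val / 2, by omega⟩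
    else ⟨σ ⟨i.val / 2, by omega⟩ + (k + 1), by
      have := (σ ⟨i.val / 2, by omega⟩).isLt
      omega⟩
  have hinj : Function.Injective f := by
    intro i j hij
    have hij' := congrArg Fin.val hij
    simp only [f] at hij'
    split_ifs at hij' with h1 h2 h2
    · simp only at hij'
      ext; omega
    · simp only at hij'
      omega
    · simp only at hij'
      omega
    · simp only at hij'
      have h3 : σ ⟨i.val / 2, by omega⟩ = σ ⟨j.val / 2, by omega⟩ := by
        ext; omega
      have h4 := congrArg Fin.val (σ.injective h3)
      simp only at h4
      ext; omega
  let F : Equiv.Perm (Fin (2 * k + 1)) :=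
    Equiv.ofBijective f (Finite.injective_iff_bijective.mp hinj)
  have hE : ∀ (j : ℕ) (hj : j ≤ k), (F ⟨2 * j, by omega⟩ : ℕ) = k - j := by
    intro j hj
    simp [F, f]
  have hO : ∀ j : Fin k, (F ⟨2 * j.val + 1, by omega⟩ : ℕ) = σ j + (k + 1) := by
    intro j
    have h2 : (2 * j.val + 1) / 2 = j.val := by omega
    simp [F, f, h2]
  refine le_trans ?_ (sep_le_tau F)
  rw [sep_eq, sep_eq]
  have hsub : Finset.range k ∪ (sepN σ).map (addRightEmbedding (k + 1)) ⊆ sepN F := by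
    intro v hv
    rw [mem_sepN]
    rcases Finset.mem_union.mp hv with hv | hv
    · have hv := Finset.mem_range.mp hv
      refine ⟨⟨2 * (k - 1 - v), by omega⟩, ⟨2 * (k - 1 - v) + 1, by omega⟩, ⟨2 * (k - v), by omega⟩,
        ?_, ?_, ?_, ?_, ?_⟩
      · simp [Fin.lt_def]
      · simp only [Fin.lt_def]; omega
      · rw [hE _ (by omega)]; omega
      · have := hO ⟨k - 1 - v, by omega⟩
        simp only at this
        rw [this]; omega
      · rw [hE _ (by omega)]; omega
    · obtain ⟨w, hw, rfl⟩ := Finset.mem_map.mp hv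
      obtain ⟨p, q, r, h1, h2, h3, h4, h5⟩ := (mem_sepN _ _).mp hw
      have hp := hO p
      have hq := hO q
      have hr := hO r
      refine ⟨_, _, _, ?_, ?_, hp.trans ?_, lt_of_lt_of_eq ?_ hq.symm, hr.trans ?_⟩
      · simp only [Fin.lt_def] at *; omega
      · simp only [Fin.lt_def] at *; omega
      · simp; omega
      · simp; omega
      · simp; omega
  have hc := Finset.card_le_card hsub
  rw [Finset.card_union_of_disjoint, Finset.card_range, Finset.card_map] at hc
  · exact hc
  · rw [Finset.disjoint_left]
    intro v hv hv'
    obtain ⟨w, hw, rfl⟩ := Finset.mem_map.mp hv'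
    simp at hv
    omega

lemma upper_top (k : ℕ) (π : Equiv.Perm (Fin (2 * k + 1))) :
    ((sepN π).filter (fun v => k + 1 ≤ v)).card ≤ tau k := by
  classical
  let S : Finset (Fin (2 * k + 1)) := Finset.univ.filter fun i => k + 1 ≤ (π i : ℕ)
  have hS : S.card = k := by
    have h1 : S.map (π.toEmbedding.trans Fin.valEmbedding) = Finset.Ico (k + 1) (2 * k + 1) := by
      ext x
      simp only [S, Finset.mem_map, Finset.mem_filter, Finset.mem_univ, true_and, Finset.mem_Ico]
      constructor
      · rintro ⟨a, ha, rfl⟩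
        exact ⟨ha, (π a).isLt⟩
      · rintro ⟨ha, hb⟩
        exact ⟨π.symm ⟨x, hb⟩, by simpa using ha, by simp⟩
    rw [← Finset.card_map (π.toEmbedding.trans Fin.valEmbedding), h1]
    simp; omega
  let e := S.orderIsoOfFin hS
  have he : ∀ i, k + 1 ≤ (π (e i).1 : ℕ) := fun i => (Finset.mem_filter.mp (e i).2).2
  let g : Fin k → Fin k := fun i => ⟨(π (e i).1 : ℕ) - (k + 1), by
    have := (π (e i).1).isLt
    have := he i
    omega⟩
  have hinj : Function.Injective g := by
    intro i j hij
    have h := congrArg Fin.val hij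
    simp only [g] at h
    have := he i
    have := he j
    have h2 : π (e i).1 = π (e j).1 := by ext; omega
    exact e.injective (Subtype.ext (π.injective h2))
  let σ : Equiv.Perm (Fin k) := Equiv.ofBijective g (Finite.injective_iff_bijective.mp hinj)
  refine le_trans ?_ (sep_le_tau σ)
  rw [sep_eq, ← Finset.card_map (addRightEmbedding (k + 1)) (s := sepN σ)]
  apply Finset.card_le_card
  intro v hv
  obtain ⟨hv, hkv⟩ := Finset.mem_filter.mp hv
  obtain ⟨p, q, r, h1, h2, h3, h4, h5⟩ := (mem_sepN _ _).mp hv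
  have key : ∀ p : Fin (2 * k + 1), k + 1 ≤ (π p : ℕ) →
      ∃ i, (e i).1 = p ∧ (σ i : ℕ) = π p - (k + 1) := by
    intro p hp
    refine ⟨e.symm ⟨p, Finset.mem_filter.mpr ⟨Finset.mem_univ _, hp⟩⟩, ?_, ?_⟩
    · simp
    · simp [σ, g]
  obtain ⟨p', hp, hp'⟩ := key p (by omega)
  obtain ⟨q', hq, hq'⟩ := key q (by omega)
  obtain ⟨r', hr, hr'⟩ := key r (by omega)
  refine Finset.mem_map.mpr ⟨v - (k + 1), (mem_sepN _ _).mpr ⟨p', q', r', ?_, ?_, ?_, ?_, ?_⟩, ?_⟩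
  · rw [← e.lt_iff_lt, ← Subtype.coe_lt_coe, hp, hq]; exact h1
  · rw [← e.lt_iff_lt, ← Subtype.coe_lt_coe, hr, hq]; exact h2
  · omega
  · omega
  · omega
  · simp; omega

lemma upper_bot (k : ℕ) (hk : 1 ≤ k) (π : Equiv.Perm (Fin (2 * k + 1))) :
    ((sepN π).filter (fun v => ¬ k + 1 ≤ v)).card ≤ k := by
  classical
  by_contra hcon
  have hsub : (sepN π).filter (fun v => ¬ k + 1 ≤ v) ⊆ Finset.range (k + 1) := by
    intro v hv
    have := (Finset.mem_filter.mp hv).2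
    simp; omega
  have heq := Finset.eq_of_subset_of_card_le hsub (by rw [Finset.card_range]; omega)
  -- position function
  let P : ℕ → ℕ := fun v => if h : v < 2 * k + 1 then (π.symm ⟨v, h⟩).val else 0
  have hP : ∀ p : Fin (2 * k + 1), P (π p) = p := by
    intro p
    simp only [P, (π p).isLt, dite_true, Fin.eta, Equiv.symm_apply_apply]
  have hall : ∀ v, v ≤ k → ∃ q : Fin (2 * k + 1), P (v + 1) < q ∧ (q : ℕ) < P v ∧
      v + 1 < (π q : ℕ) := by
    intro v hv
    have : v ∈ (sepN π).filter (fun v => ¬ k + 1 ≤ v) := by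
      rw [heq]; simp; omega
    obtain ⟨p, q, r, h1, h2, h3, h4, h5⟩ := (mem_sepN _ _).mp (Finset.mem_filter.mp this).1
    refine ⟨q, ?_, ?_, h4⟩
    · rw [← h3, hP]; exact h1
    · rw [← h5, hP]; exact h2
  have hmono : ∀ d v, v + d ≤ k + 1 → P (v + d) ≤ P v := by
    intro d
    induction d with
    | zero => intro v _; exact le_rfl
    | succ d ih =>
      intro v hv
      obtain ⟨q, h1, h2, _⟩ := hall (v + d) (by omega)
      have := ih v (by omega)
      rw [← add_assoc]
      omega
  have hmono' : ∀ v w, v ≤ w → w ≤ k + 1 → P w ≤ P v := by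
    intro v w h1 h2
    obtain ⟨d, rfl⟩ := Nat.exists_eq_add_of_le h1
    exact hmono d v h2
  choose! Q hQ1 hQ2 hQ3 using hall
  have hval : ∀ v ≤ k, k + 2 ≤ (π (Q v) : ℕ) := by
    intro v hv
    by_contra hlt
    have h1 := hmono' (v + 1) (π (Q v)) (le_of_lt (hQ3 v hv)) (by omega)
    rw [hP] at h1
    have := hQ1 v hv
    omega
  have hlt : ∀ v w, v < w → w ≤ k → Q w < Q v := by
    intro v w h1 h2
    have a := hQ2 w h2
    have b := hQ1 v (by omega)
    have c := hmono' (v + 1) w h1 (by omega)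
    rw [Fin.lt_def]; omega
  have hcard : (Finset.range (k + 1)).card ≤ (Finset.Ico (k + 2) (2 * k + 1)).card := by
    apply Finset.card_le_card_of_injOn (fun v => (π (Q v) : ℕ))
    · intro v hv
      have hv : v < k + 1 := by simpa using hv
      simp only [Finset.coe_Ico, Set.mem_Ico]
      exact ⟨hval v (by omega), (π (Q v)).isLt⟩
    · intro v hv w hw hvw
      have hv : v < k + 1 := by simpa using hv
      have hw : w < k + 1 := by simpa using hw
      have h : Q v = Q w := π.injective (Fin.ext hvw)
      rcases lt_trichotomy v w with h1 | h1 | h1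
      · have := hlt v w h1 (by omega)
        rw [h] at this
        exact absurd this (lt_irrefl _)
      · exact h1
      · have := hlt w v h1 (by omega)
        rw [h] at this
        exact absurd this (lt_irrefl _)
  simp at hcard
  omega

/-- For `k ≥ 1`, `τ(2k+1) = k + τ(k)`. -/
theorem tau_odd (k : ℕ) (hk : 1 ≤ k) : tau (2 * k + 1) = k + tau k := by
  apply le_antisymm
  · refine Finset.sup_le fun π _ => ?_
    rw [sep_eq, ← Finset.card_filter_add_card_filter_not (s := sepN π) (fun v => k + 1 ≤ v)]
    have := upper_top k π
    have := upper_bot k hk π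
    omega
  · obtain ⟨σ, _, hσ⟩ := Finset.exists_mem_eq_sup (Finset.univ : Finset (Equiv.Perm (Fin k)))
      Finset.univ_nonempty (fun π => sep π)
    have : tau k = sep σ := hσ
    rw [this]
    exact lower k σ
end

section
/- For every positive integer n, τ(n+1) ≤ τ(n) + 1. -/
/-- Deleting the smallest value destroys at most one separated pair. -/
theorem sep_le_tau_succ (n : ℕ) (π : Equiv.Perm (Fin (n + 1))) : sep π ≤ tau n + 1 := by
  obtain ⟨p0, hp0⟩ := π.surjective 0
  have hne : ∀ i : Fin n, π (p0.succAbove i) ≠ 0 := by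
    intro i h
    exact Fin.succAbove_ne p0 i (π.injective (h.trans hp0.symm))
  let f : Fin n → Fin n := fun i => (π (p0.succAbove i)).pred (hne i)
  have hf : ∀ i, (f i).succ = π (p0.succAbove i) := fun i => Fin.succ_pred _ _
  have hinj : Function.Injective f := by
    intro i j hij
    have h : (f i).succ = (f j).succ := by rw [hij]
    rw [hf, hf] at h
    exact Fin.succAbove_right_injective (π.injective h)
  let σ : Equiv.Perm (Fin n) := Equiv.ofBijective f (Finite.injective_iff_bijective.mp hinj)
  have hσ : ∀ i, (σ i).succ = π (p0.succAbove i) := hf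
  have key : ∀ x : Fin (n + 1), π x ≠ 0 → ∃ i, p0.succAbove i = x := by
    intro x hx
    apply Fin.exists_succAbove_eq
    rintro rfl
    exact hx hp0
  have hsub : {v | IsSepPair π v} ⊆ insert 0 (Fin.succ '' {v | IsSepPair σ v}) := by
    rintro v ⟨p, q, r, hpq, hqr, hp, hq, hr⟩
    by_cases hv : v = 0
    · exact Or.inl hv
    · right
      obtain ⟨w, rfl⟩ := Fin.exists_succ_eq.mpr hv
      obtain ⟨p', rfl⟩ := key p (by intro h; simp [h] at hp)
      obtain ⟨q', rfl⟩ := key q (by intro h; simp [h] at hq)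
      obtain ⟨r', rfl⟩ := key r (by rw [hr]; exact hv)
      rw [← hσ] at hp hq hr
      refine ⟨w, ⟨p', q', r', ?_, ?_, ?_, ?_, Fin.succ_injective _ hr⟩, rfl⟩
      · exact (Fin.strictMono_succAbove p0).lt_iff_lt.mp hpq
      · exact (Fin.strictMono_succAbove p0).lt_iff_lt.mp hqr
      · simpa using hp
      · simpa using hq
  have h1 : sep π ≤ sep σ + 1 := by
    unfold sep
    refine (Set.ncard_le_ncard hsub (Set.toFinite _)).trans ?_
    refine (Set.ncard_insert_le _ _).trans ?_
    exact Nat.add_le_add_right (Set.ncard_image_le (Set.toFinite _)) 1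
  have h2 : sep σ ≤ tau n :=
    Finset.le_sup (f := fun π : Equiv.Perm (Fin n) => sep π) (Finset.mem_univ σ)
  omega

/-- For every positive `n`, `τ(n+1) ≤ τ(n) + 1`. -/
theorem tau_succ_le (n : ℕ) (hn : 1 ≤ n) : tau (n + 1) ≤ tau n + 1 := by
  exact Finset.sup_le fun π _ => sep_le_tau_succ n π
end

section
/- For every integer k ≥ 2, the maximum number of separated pairs among permutations of length 2k satisfies τ(2k) ≥ k − 1 + τ(k − 1). -/
/-- Underlying function of the interleaved permutation. -/
def bigFun (m : ℕ) (σ : Equiv.Perm (Fin m)) (p : Fin (2 * (m + 1))) : Fin (2 * (m + 1)) :=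
  if (p : ℕ) % 2 = 0 then ⟨m + 1 - (p : ℕ) / 2, by omega⟩
  else if h : (p : ℕ) / 2 < m then
    ⟨m + 2 + (σ ⟨(p : ℕ) / 2, h⟩ : ℕ), by have := (σ ⟨(p : ℕ) / 2, h⟩).isLt; omega⟩
  else ⟨0, by omega⟩

lemma bigFun_even (m : ℕ) (σ : Equiv.Perm (Fin m)) (i : ℕ) (h : 2 * i < 2 * (m + 1)) :
    (bigFun m σ ⟨2 * i, h⟩ : ℕ) = m + 1 - i := by
  simp [bigFun]

lemma bigFun_odd (m : ℕ) (σ : Equiv.Perm (Fin m)) (i : Fin m)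
    (h : 2 * (i : ℕ) + 1 < 2 * (m + 1)) :
    (bigFun m σ ⟨2 * (i : ℕ) + 1, h⟩ : ℕ) = m + 2 + (σ i : ℕ) := by
  have h1 : (2 * (i : ℕ) + 1) / 2 = i := by omega
  have h2 : (2 * (i : ℕ) + 1) % 2 = 1 := by omega
  simp [bigFun, h1]

lemma bigFun_last (m : ℕ) (σ : Equiv.Perm (Fin m)) (h : 2 * m + 1 < 2 * (m + 1)) :
    (bigFun m σ ⟨2 * m + 1, h⟩ : ℕ) = 0 := by
  have h1 : (2 * m + 1) / 2 = m := by omega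
  simp [bigFun, h1]

lemma pos_cases (m : ℕ) (p : Fin (2 * (m + 1))) :
    (∃ i : ℕ, ∃ h : 2 * i < 2 * (m + 1), p = ⟨2 * i, h⟩) ∨
    (∃ i : Fin m, p = ⟨2 * (i : ℕ) + 1, by omega⟩) ∨ p = ⟨2 * m + 1, by omega⟩ := by
  obtain ⟨p, hp⟩ := p
  by_cases h : p % 2 = 0
  · exact Or.inl ⟨p / 2, by omega, by ext; simp; omega⟩
  · by_cases h' : p / 2 < m
    · exact Or.inr (Or.inl ⟨⟨p / 2, h'⟩, by ext; simp; omega⟩)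
    · exact Or.inr (Or.inr (by ext; simp; omega))

lemma bigFun_injective (m : ℕ) (σ : Equiv.Perm (Fin m)) : Function.Injective (bigFun m σ) := by
  intro p q hpq
  have hv : (bigFun m σ p : ℕ) = bigFun m σ q := by rw [hpq]
  rcases pos_cases m p with ⟨i, hi, rfl⟩ | ⟨i, rfl⟩ | rfl <;>
  rcases pos_cases m q with ⟨j, hj, rfl⟩ | ⟨j, rfl⟩ | rfl <;>
  simp only [bigFun_even, bigFun_odd, bigFun_last] at hv
  · ext; simp; omega
  · omega
  · omega
  · omega
  · have : σ i = σ j := by ext; omega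
    rw [σ.injective this]
  · omega
  · omega
  · omega
  · rfl

/-- The interleaved permutation. -/
noncomputable def bigPerm (m : ℕ) (σ : Equiv.Perm (Fin m)) : Equiv.Perm (Fin (2 * (m + 1))) :=
  Equiv.ofBijective (bigFun m σ) (Finite.injective_iff_bijective.mp (bigFun_injective m σ))

/-- Low separated values. -/
def lowVal (m : ℕ) (i : Fin m) : Fin (2 * (m + 1)) := ⟨m - (i : ℕ), by omega⟩

/-- High separated values. -/
def highVal (m : ℕ) (i : Fin m) : Fin (2 * (m + 1)) := ⟨m + 2 + (i : ℕ), by omega⟩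

lemma low_sep (m : ℕ) (σ : Equiv.Perm (Fin m)) (i : Fin m) :
    IsSepPair (bigPerm m σ) (lowVal m i) := by
  refine ⟨⟨2 * i, by omega⟩, ⟨2 * i + 1, by omega⟩, ⟨2 * (i + 1), by omega⟩, ?_, ?_, ?_, ?_, ?_⟩
  · simp
  · simp; omega
  · simp only [bigPerm, Equiv.ofBijective_apply, bigFun_even, lowVal]; omega
  · simp only [bigPerm, Equiv.ofBijective_apply, bigFun_odd, lowVal]; omega
  · ext
    simp only [bigPerm, Equiv.ofBijective_apply, bigFun_even, lowVal]; omega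

lemma high_sep (m : ℕ) (σ : Equiv.Perm (Fin m)) (v : Fin m) (hv : IsSepPair σ v) :
    IsSepPair (bigPerm m σ) (highVal m v) := by
  obtain ⟨p, q, r, hpq, hqr, h1, h2, h3⟩ := hv
  refine ⟨⟨2 * p + 1, by omega⟩, ⟨2 * q + 1, by omega⟩, ⟨2 * r + 1, by omega⟩, ?_, ?_, ?_, ?_, ?_⟩
  · simpa using hpq
  · simpa using hqr
  · simp only [bigPerm, Equiv.ofBijective_apply, bigFun_odd, highVal]; omega
  · simp only [bigPerm, Equiv.ofBijective_apply, bigFun_odd, highVal]; omega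
  · ext
    simp only [bigPerm, Equiv.ofBijective_apply, bigFun_odd, highVal, h3]

lemma sep_bigPerm (m : ℕ) (σ : Equiv.Perm (Fin m)) : m + sep σ ≤ sep (bigPerm m σ) := by
  have hl : Function.Injective (lowVal m) := by
    intro i j h
    simp only [lowVal, Fin.mk.injEq] at h
    ext; omega
  have hh : Function.Injective (highVal m) := by
    intro i j h
    simp only [highVal, Fin.mk.injEq] at h
    ext; omega
  have hd : Disjoint (Set.range (lowVal m)) (highVal m '' {v | IsSepPair σ v}) := by
    rw [Set.disjoint_left]
    rintro _ ⟨i, rfl⟩ ⟨j, -, h⟩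
    simp only [highVal, lowVal, Fin.mk.injEq] at h
    omega
  have h1 : (Set.range (lowVal m)).ncard = m := by
    rw [← Set.image_univ, Set.ncard_image_of_injective _ hl, Set.ncard_univ, Nat.card_fin]
  have h2 : (highVal m '' {v | IsSepPair σ v}).ncard = sep σ :=
    Set.ncard_image_of_injective _ hh
  have h3 := Set.ncard_union_eq hd (Set.toFinite _) (Set.toFinite _)
  rw [h1, h2] at h3
  rw [← h3]
  apply Set.ncard_le_ncard _ (Set.toFinite _)
  rintro _ (⟨i, rfl⟩ | ⟨v, hv, rfl⟩)
  · exact low_sep m σ i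
  · exact high_sep m σ v hv

/-- For `k ≥ 2`, `τ(2k) ≥ k - 1 + τ(k - 1)`. -/
theorem tau_even_ge (k : ℕ) (hk : 2 ≤ k) : k - 1 + tau (k - 1) ≤ tau (2 * k) := by
  obtain ⟨m, rfl⟩ : ∃ m, k = m + 1 := ⟨k - 1, by omega⟩
  rw [Nat.add_sub_cancel]
  obtain ⟨σ, -, hσ⟩ := Finset.exists_mem_eq_sup (Finset.univ : Finset (Equiv.Perm (Fin m)))
    Finset.univ_nonempty (fun π => sep π)
  have h : tau m = sep σ := hσ
  rw [h]
  exact (sep_bigPerm m σ).trans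
    (Finset.le_sup (f := fun π : Equiv.Perm (Fin (2 * (m + 1))) => sep π) (Finset.mem_univ _))
end

section
/- For every integer k ≥ 1, the maximum number of separated pairs among permutations of length 2k satisfies τ(2k) ≥ k − 1 + τ(k). -/
/-- The interleaving of `k-1, k-2, …, 0` (even positions) with `k + σ` (odd positions). -/
def interFun {k : ℕ} (σ : Equiv.Perm (Fin k)) (j : Fin (2 * k)) : Fin (2 * k) :=
  if (j : ℕ) % 2 = 0 then ⟨k - 1 - (j : ℕ) / 2, by have := j.2; omega⟩
  else ⟨k + (σ ⟨(j : ℕ) / 2, by have := j.2; omega⟩ : ℕ), by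
    have := (σ ⟨(j : ℕ) / 2, by have := j.2; omega⟩).2; omega⟩

theorem interFun_even {k : ℕ} (σ : Equiv.Perm (Fin k)) (i : ℕ) (h : 2 * i < 2 * k) :
    (interFun σ ⟨2 * i, h⟩ : ℕ) = k - 1 - i := by
  simp [interFun]

theorem interFun_odd {k : ℕ} (σ : Equiv.Perm (Fin k)) (i : Fin k) (h : 2 * (i : ℕ) + 1 < 2 * k) :
    (interFun σ ⟨2 * (i : ℕ) + 1, h⟩ : ℕ) = k + (σ i : ℕ) := by
  have h1 : (2 * (i : ℕ) + 1) % 2 ≠ 0 := by omega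
  have h2 : (2 * (i : ℕ) + 1) / 2 = i := by omega
  simp [interFun, h2]

theorem interFun_injective {k : ℕ} (σ : Equiv.Perm (Fin k)) :
    Function.Injective (interFun σ) := by
  intro a b hab
  have ha := a.2
  have hb := b.2
  have hab' : (interFun σ a : ℕ) = interFun σ b := congrArg _ hab
  apply Fin.ext
  unfold interFun at hab'
  split_ifs at hab' with h1 h2 h2
  · simp only at hab'; omega
  · simp only at hab'; omega
  · simp only at hab'; omega
  · simp only at hab'
    have h3 := σ.injective (Fin.ext (Nat.add_left_cancel hab'))
    have h4 := congrArg Fin.val h3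
    simp only at h4
    omega

/-- The interleaving as a permutation. -/
noncomputable def interPerm {k : ℕ} (σ : Equiv.Perm (Fin k)) : Equiv.Perm (Fin (2 * k)) :=
  Equiv.ofBijective (interFun σ) (Finite.injective_iff_bijective.mp (interFun_injective σ))

theorem sep_interPerm {k : ℕ} (hk : 1 ≤ k) (σ : Equiv.Perm (Fin k)) :
    k - 1 + sep σ ≤ sep (interPerm σ) := by
  let f : Fin (k - 1) → Fin (2 * k) := fun i => ⟨i, by have := i.2; omega⟩
  let g : Fin k → Fin (2 * k) := fun i => ⟨k + i, by have := i.2; omega⟩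
  have hf : Function.Injective f := by
    intro a b h
    have := congrArg Fin.val h
    exact Fin.ext this
  have hg : Function.Injective g := by
    intro a b h
    have : k + (a : ℕ) = k + b := congrArg Fin.val h
    exact Fin.ext (by omega)
  have hdis : Disjoint (f '' Set.univ) (g '' {v | IsSepPair σ v}) := by
    rw [Set.disjoint_left]
    rintro _ ⟨a, -, rfl⟩ ⟨b, -, h⟩
    have h' : k + (b : ℕ) = a := congrArg Fin.val h
    have := a.2
    omega
  have hsub : f '' Set.univ ∪ g '' {v | IsSepPair σ v} ⊆ {v | IsSepPair (interPerm σ) v} := by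
    rintro _ (⟨a, -, rfl⟩ | ⟨v, ⟨p, q, r, hpq, hqr, h1, h2, h3⟩, rfl⟩)
    · have ha := a.2
      refine ⟨⟨2 * (k - 2 - a), by omega⟩,
        ⟨2 * ((⟨k - 2 - a, by omega⟩ : Fin k) : ℕ) + 1, by simp only; omega⟩,
        ⟨2 * (k - 1 - a), by omega⟩, ?_, ?_, ?_, ?_, ?_⟩
      · simp [Fin.lt_def]
      · simp only [Fin.lt_def]; omega
      · change (interFun σ _ : ℕ) = (a : ℕ) + 1
        rw [interFun_even]; omega
      · change (a : ℕ) + 1 < (interFun σ _ : ℕ)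
        rw [interFun_odd]; omega
      · apply Fin.ext
        change (interFun σ _ : ℕ) = (a : ℕ)
        rw [interFun_even]; omega
    · have hp := p.2
      have hq := q.2
      have hr := r.2
      rw [Fin.lt_def] at hpq hqr
      refine ⟨⟨2 * (p : ℕ) + 1, by omega⟩, ⟨2 * (q : ℕ) + 1, by omega⟩,
        ⟨2 * (r : ℕ) + 1, by omega⟩, ?_, ?_, ?_, ?_, ?_⟩
      · simp only [Fin.lt_def]; omega
      · simp only [Fin.lt_def]; omega
      · change (interFun σ _ : ℕ) = k + (v : ℕ) + 1
        rw [interFun_odd]; omega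
      · change k + (v : ℕ) + 1 < (interFun σ _ : ℕ)
        rw [interFun_odd]; omega
      · apply Fin.ext
        change (interFun σ _ : ℕ) = k + (v : ℕ)
        rw [interFun_odd, h3]
  have hle := Set.ncard_le_ncard hsub (Set.toFinite _)
  rw [Set.ncard_union_eq hdis (Set.toFinite _) (Set.toFinite _),
    Set.ncard_image_of_injective _ hf, Set.ncard_image_of_injective _ hg,
    Set.ncard_univ, Nat.card_eq_fintype_card, Fintype.card_fin] at hle
  exact hle

/-- For `k ≥ 1`, `τ(2k) ≥ k - 1 + τ(k)`. -/
theorem tau_even_ge' (k : ℕ) (hk : 1 ≤ k) : k - 1 + tau k ≤ tau (2 * k) := by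
  obtain ⟨σ, -, hσ⟩ := Finset.exists_mem_eq_sup (Finset.univ : Finset (Equiv.Perm (Fin k)))
    Finset.univ_nonempty (fun π => sep π)
  have h1 : tau k = sep σ := hσ
  rw [h1]
  exact (sep_interPerm hk σ).trans
    (Finset.le_sup (f := fun π : Equiv.Perm (Fin (2 * k)) => sep π) (Finset.mem_univ _))
end

section
/- For every integer n ≥ 2, the maximum number of separated pairs among permutations of length n satisfies the recurrence τ(n) = ⌊(n − 1)/2⌋ + τ(⌊n/2⌋). -/
/-- Separators of a block of consecutive separated pairs lie above the block. -/
lemma block_le {n : ℕ} (π : Equiv.Perm (Fin n)) (v u : ℕ) (hu : u < n)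
    (h : ∀ w (hw : w < n), v ≤ w → w < u → IsSepPair π ⟨w, hw⟩) : u - v ≤ n - (u + 1) := by
  classical
  let pos : ℕ → ℕ := fun w => if hw : w < n then (π.symm ⟨w, hw⟩ : ℕ) else 0
  have hpos : ∀ p : Fin n, pos (π p : ℕ) = p := by
    intro p
    simp [pos]
  have key : ∀ w, ∃ q : Fin n, v ≤ w → w < u →
      pos (w + 1) < q ∧ (q : ℕ) < pos w ∧ w + 1 < (π q : ℕ) := by
    intro w
    by_cases hw : v ≤ w ∧ w < u
    · obtain ⟨p, q, r, hpq, hqr, h1, h2, h3⟩ := h w (by omega) hw.1 hw.2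
      refine ⟨q, fun _ _ => ⟨?_, ?_, h2⟩⟩
      · have := hpos p
        rw [h1] at this
        simp only at this
        rw [this]; exact hpq
      · have := hpos r
        rw [h3] at this
        simp only at this
        rw [this]; exact hqr
    · exact ⟨⟨u, hu⟩, fun a b => absurd ⟨a, b⟩ hw⟩
  choose q hq using key
  have mono : ∀ a, v ≤ a → ∀ b, a + 1 ≤ b → b ≤ u → pos b < pos a := by
    intro a ha b hab
    induction b, hab using Nat.le_induction with
    | base => intro hb; have := hq a ha (by omega); omega
    | succ b hab ih =>
      intro hb
      have := hq b (by omega) (by omega)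
      have := ih (by omega)
      omega
  have hc := Finset.card_le_card_of_injOn (s := Finset.Ico v u) (t := Finset.Ico (u + 1) n)
    (fun w => (π (q w) : ℕ)) ?_ ?_
  · simpa using hc
  · intro w hw
    simp only [Finset.coe_Ico, Set.mem_Ico] at hw ⊢
    refine ⟨?_, (π (q w)).2⟩
    by_contra hlt
    have h1 := hq w hw.1 hw.2
    have h2 := hpos (q w)
    by_cases he : (π (q w) : ℕ) ≤ w + 1
    · omega
    · have := mono (w + 1) (by omega) (π (q w) : ℕ) (by omega) (by omega)
      omega
  · have lt : ∀ a b, v ≤ a → a < b → b < u → q a ≠ q b := by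
      intro a b ha hab hb he
      have h1 := hq a ha (by omega)
      have h2 := hq b (by omega) hb
      rw [he] at h1
      rcases Nat.eq_or_lt_of_le (show a + 1 ≤ b from hab) with h3 | h3
      · rw [h3] at h1; omega
      · have := mono (a + 1) (by omega) b h3 (by omega)
        omega
    intro a ha b hb hab
    simp only [Finset.coe_Ico, Set.mem_Ico] at ha hb
    have hab' : q a = q b := π.injective (Fin.ext hab)
    rcases lt_trichotomy a b with h1 | h1 | h1
    · exact absurd hab' (lt a b ha.1 h1 hb.2)
    · exact h1
    · exact absurd hab'.symm (lt b a hb.1 h1 ha.2)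

open Classical in
lemma count_bound {n : ℕ} (π : Equiv.Perm (Fin n)) : ∀ d v, n - v = d →
    d + 1 ≤ 2 ^ (Finset.univ.filter fun w : Fin n => v ≤ (w : ℕ) ∧ ¬ IsSepPair π w).card := by
  intro d
  induction d using Nat.strong_induction_on with
  | _ d ih =>
    intro v hv
    rcases Nat.eq_zero_or_pos d with h0 | h0
    · subst h0; exact Nat.one_le_two_pow
    have hex : ∃ u, v ≤ u ∧ ∃ hu : u < n, ¬ IsSepPair π ⟨u, hu⟩ := by
      refine ⟨n - 1, by omega, by omega, ?_⟩
      rintro ⟨p, q, r, -, -, h1, -, -⟩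
      have := (π p).2
      simp only at h1
      omega
    obtain ⟨hvu, hu, hns⟩ := Nat.find_spec hex
    have hmin : ∀ w (hw : w < n), v ≤ w → w < Nat.find hex → IsSepPair π ⟨w, hw⟩ := by
      intro w hw h1 h2
      by_contra h3
      exact Nat.find_min hex h2 ⟨h1, hw, h3⟩
    generalize Nat.find hex = u at *
    have hb := block_le π v u hu hmin
    have hi := ih (n - (u + 1)) (by omega) (u + 1) rfl
    have hcard : (Finset.univ.filter fun w : Fin n => u + 1 ≤ (w : ℕ) ∧ ¬ IsSepPair π w).card + 1
        ≤ (Finset.univ.filter fun w : Fin n => v ≤ (w : ℕ) ∧ ¬ IsSepPair π w).card := by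
      rw [Nat.succ_le_iff]
      apply Finset.card_lt_card
      refine ⟨?_, ?_⟩
      · intro w hw
        simp only [Finset.mem_filter, Finset.mem_univ, true_and] at hw ⊢
        exact ⟨by omega, hw.2⟩
      · intro hsub
        have := hsub (x := ⟨u, hu⟩) (by simp [hvu, hns])
        simp at this
    have hp := Nat.pow_le_pow_right (n := 2) (by norm_num) hcard
    rw [pow_succ] at hp
    omega

lemma sep_upper {n : ℕ} (π : Equiv.Perm (Fin n)) : sep π + Nat.size n ≤ n := by
  classical
  have h := count_bound π n 0 rfl
  have hs : sep π = (Finset.univ.filter fun w : Fin n => IsSepPair π w).card := by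
    rw [sep, Set.ncard_eq_toFinset_card']
    congr 1
    ext; simp
  have hc := Finset.card_filter_add_card_filter_not (s := (Finset.univ : Finset (Fin n)))
    (fun w => IsSepPair π w)
  simp only [Nat.zero_le, true_and] at h
  have h2 := Nat.size_le.2 (Nat.lt_of_succ_le h)
  simp only [Finset.card_univ, Fintype.card_fin] at hc
  omega

lemma tau_upper (n : ℕ) : tau n + Nat.size n ≤ n := by
  obtain ⟨π, -, h⟩ := Finset.exists_mem_eq_sup (Finset.univ : Finset (Equiv.Perm (Fin n)))
    Finset.univ_nonempty (fun π => sep π)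
  rw [tau, h]
  exact sep_upper π

lemma tau_lower (n : ℕ) (hn : 2 ≤ n) : (n - 1) / 2 + tau (n / 2) ≤ tau n := by
  classical
  obtain ⟨σ, -, h⟩ := Finset.exists_mem_eq_sup (Finset.univ : Finset (Equiv.Perm (Fin (n / 2))))
    Finset.univ_nonempty (fun π => sep π)
  have h' : tau (n / 2) = sep σ := h
  rw [h']
  obtain ⟨m, hm⟩ : ∃ m, m = n - n / 2 := ⟨_, rfl⟩
  let f : Fin n → Fin n := fun p =>
    if hp : (p : ℕ) % 2 = 0 then ⟨m - 1 - p / 2, by omega⟩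
    else ⟨m + σ ⟨p / 2, by omega⟩, by have := (σ ⟨p / 2, by omega⟩).2; omega⟩
  have fe : ∀ p : Fin n, (p : ℕ) % 2 = 0 → (f p : ℕ) = m - 1 - p / 2 := by
    intro p hp; simp [f, hp]
  have fo : ∀ (j : Fin (n / 2)) (hj : 2 * (j : ℕ) + 1 < n),
      (f ⟨2 * j + 1, hj⟩ : ℕ) = m + σ j := by
    intro j hj
    have h1 : ¬ (2 * (j : ℕ) + 1) % 2 = 0 := by omega
    have h2 : (2 * (j : ℕ) + 1) / 2 = j := by omega
    simp only [f, h1, h2, dite_false]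
  have fo' : ∀ p : Fin n, (p : ℕ) % 2 ≠ 0 →
      ∃ j : Fin (n / 2), (p : ℕ) = 2 * j + 1 ∧ (f p : ℕ) = m + σ j := by
    intro p hp
    have hlt := p.2
    refine ⟨⟨p / 2, by omega⟩, by simp only; omega, by simp [f, hp]⟩
  have finj : Function.Injective f := by
    intro a b hab
    have hab : (f a : ℕ) = f b := by rw [hab]
    have ha := a.2
    have hb := b.2
    apply Fin.ext
    by_cases h1 : (a : ℕ) % 2 = 0 <;> by_cases h2 : (b : ℕ) % 2 = 0
    · rw [fe a h1, fe b h2] at hab; omega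
    · obtain ⟨j, hj, hj'⟩ := fo' b h2
      rw [fe a h1, hj'] at hab; omega
    · obtain ⟨j, hj, hj'⟩ := fo' a h1
      rw [fe b h2, hj'] at hab; omega
    · obtain ⟨j, hj, hj'⟩ := fo' a h1
      obtain ⟨k, hk, hk'⟩ := fo' b h2
      rw [hj', hk'] at hab
      have : σ j = σ k := Fin.ext (by omega)
      rw [σ.injective this] at hj
      omega
  let π : Equiv.Perm (Fin n) := Equiv.ofBijective f (Finite.injective_iff_bijective.1 finj)
  have hπ : ∀ p, π p = f p := fun _ => rfl
  refine le_trans ?_ (Finset.le_sup (f := fun π : Equiv.Perm (Fin n) => sep π) (Finset.mem_univ π))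
  let g : Fin ((n - 1) / 2) ⊕ {w // IsSepPair σ w} → {v // IsSepPair π v} := fun x =>
    match x with
    | .inl i => ⟨⟨i, by omega⟩, by
        have hi := i.2
        refine ⟨⟨2 * (m - 2 - i), by omega⟩, ⟨2 * (m - 2 - i) + 1, by omega⟩,
          ⟨2 * (m - 2 - i) + 2, by omega⟩, ?_, ?_, ?_, ?_, ?_⟩
        · simp [Fin.lt_def]
        · simp [Fin.lt_def]
        · rw [hπ, fe _ (by simp only; omega)]; simp only; omega
        · rw [hπ]
          have := fo ⟨m - 2 - i, by omega⟩ (by simp only; omega)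
          simp only at this
          rw [this]; simp only; omega
        · apply Fin.ext
          rw [hπ, fe _ (by simp only; omega)]; simp only; omega⟩
    | .inr w => ⟨⟨m + w.1, by have := w.1.2; omega⟩, by
        obtain ⟨p, q, r, hpq, hqr, h1, h2, h3⟩ := w.2
        have hp := p.2
        have hq := q.2
        have hr := r.2
        rw [Fin.lt_def] at hpq hqr
        refine ⟨⟨2 * p + 1, by omega⟩, ⟨2 * q + 1, by omega⟩, ⟨2 * r + 1, by omega⟩,
          ?_, ?_, ?_, ?_, ?_⟩
        · rw [Fin.lt_def]; simp only; omega
        · rw [Fin.lt_def]; simp only; omega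
        · rw [hπ, fo]; simp only; omega
        · rw [hπ, fo]; simp only; omega
        · apply Fin.ext
          rw [hπ, fo, h3]⟩
  have ginj : Function.Injective g := by
    rintro (a | a) (b | b) hab
    · have := congrArg (fun x => (x.1 : ℕ)) hab
      simp only [g] at this
      rw [Fin.ext this]
    · have := congrArg (fun x => (x.1 : ℕ)) hab
      simp only [g] at this
      have := a.2
      omega
    · have := congrArg (fun x => (x.1 : ℕ)) hab
      simp only [g] at this
      have := b.2
      omega
    · have := congrArg (fun x => (x.1 : ℕ)) hab
      simp only [g] at this
      rw [Subtype.ext (Fin.ext (show (a.1 : ℕ) = b.1 by omega))]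
  have hcard := Nat.card_le_card_of_injective g ginj
  rw [Nat.card_sum, Nat.card_fin] at hcard
  exact hcard

lemma tau_closed (n : ℕ) : tau n + Nat.size n = n := by
  induction n using Nat.strong_induction_on with
  | _ n ih =>
    have hu := tau_upper n
    rcases Nat.lt_or_ge n 2 with h | h
    · interval_cases n
      · simp at *; exact hu
      · simp at *; exact hu
    · have hl := tau_lower n h
      have hi := ih (n / 2) (by omega)
      have hs : Nat.size n ≥ Nat.size (n / 2) + 1 := by
        have h2 : Nat.size (n / 2) ≤ Nat.size n - 1 := by
          rw [Nat.size_le]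
          have h3 := Nat.lt_size_self n
          have h4 : 0 < Nat.size n := Nat.size_pos.2 (by omega)
          obtain ⟨k, hk⟩ : ∃ k, Nat.size n = k + 1 := ⟨_, (Nat.succ_pred_eq_of_pos h4).symm⟩
          rw [hk] at h3 ⊢
          rw [pow_succ] at h3
          simp only [Nat.add_sub_cancel]
          omega
        have h4 : 0 < Nat.size n := Nat.size_pos.2 (by omega)
        omega
      omega

/-- For `n ≥ 2`, `τ(n) = ⌊(n-1)/2⌋ + τ(⌊n/2⌋)`. -/
theorem tau_recurrence (n : ℕ) (hn : 2 ≤ n) : tau n = (n - 1) / 2 + tau (n / 2) := by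
  have h1 := tau_closed n
  have h2 := tau_closed (n / 2)
  have hl := tau_lower n hn
  have hs : Nat.size n ≥ Nat.size (n / 2) + 1 := by
    have h4 : 0 < Nat.size n := Nat.size_pos.2 (by omega)
    have h2 : Nat.size (n / 2) ≤ Nat.size n - 1 := by
      rw [Nat.size_le]
      have h3 := Nat.lt_size_self n
      obtain ⟨k, hk⟩ : ∃ k, Nat.size n = k + 1 := ⟨_, (Nat.succ_pred_eq_of_pos h4).symm⟩
      rw [hk] at h3 ⊢
      rw [pow_succ] at h3
      simp only [Nat.add_sub_cancel]
      omega
    omega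
  omega
end

section
/- For every positive integer n, the maximum number of separated pairs among permutations of length n is given by τ(n) = n − 1 − ⌊log₂(n)⌋. -/
open Classical in
/-- number of larger values to the right of `v` -/
noncomputable def rightCount {n : ℕ} (π : Equiv.Perm (Fin n)) (v : Fin n) : ℕ :=
  (Finset.univ.filter fun w : Fin n => v < w ∧ π.symm v < π.symm w).card

open Classical in
/-- number of non-separated values at least `v` -/
noncomputable def nonsepCount {n : ℕ} (π : Equiv.Perm (Fin n)) (v : Fin n) : ℕ :=
  (Finset.univ.filter fun w : Fin n => v ≤ w ∧ ¬ IsSepPair π w).card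

lemma rightCount_le {n : ℕ} (π : Equiv.Perm (Fin n)) (v : Fin n) :
    rightCount π v + v + 1 ≤ n := by
  classical
  have h : rightCount π v ≤ (Finset.Ioi v).card := by
    unfold rightCount
    apply Finset.card_le_card
    intro w hw
    simp at hw ⊢
    exact hw.1
  rw [Fin.card_Ioi] at h
  have := v.2
  omega

lemma rightCount_lt {n : ℕ} (π : Equiv.Perm (Fin n)) (v u : Fin n) (hu : (u : ℕ) = v + 1)
    (h : IsSepPair π v) : rightCount π v < rightCount π u := by
  classical
  obtain ⟨p, q, r, hpq, hqr, hp, hq, hr⟩ := h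
  have hp' : π p = u := Fin.ext (by omega)
  subst hr
  subst hp'
  unfold rightCount
  apply Finset.card_lt_card
  rw [Finset.ssubset_iff_of_subset]
  · refine ⟨π q, ?_, ?_⟩
    · simp only [Finset.mem_filter, Finset.mem_univ, true_and, Equiv.symm_apply_apply, Fin.lt_def]; omega
    · simp [hqr.le]
  · intro w hw
    simp at hw ⊢
    obtain ⟨h1, h2⟩ := hw
    have h3 : p < π.symm w := hpq.trans (hqr.trans h2)
    refine ⟨?_, h3⟩
    have hne : w ≠ π p := by
      rintro rfl
      simp at h3
    have : (w : ℕ) ≠ (π p : ℕ) := fun h => hne (Fin.ext h)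
    rw [Fin.lt_def] at h1 ⊢
    omega

lemma nonsepCount_mono {n : ℕ} (π : Equiv.Perm (Fin n)) (v u : Fin n) (hu : (u : ℕ) = v + 1) :
    nonsepCount π u ≤ nonsepCount π v := by
  classical
  unfold nonsepCount
  apply Finset.card_le_card
  intro w hw
  simp only [Finset.mem_filter, Finset.mem_univ, true_and, Fin.le_def] at hw ⊢
  exact ⟨by omega, hw.2⟩

lemma nonsepCount_lt {n : ℕ} (π : Equiv.Perm (Fin n)) (v u : Fin n) (hu : (u : ℕ) = v + 1)
    (h : ¬ IsSepPair π v) : nonsepCount π u < nonsepCount π v := by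
  classical
  unfold nonsepCount
  apply Finset.card_lt_card
  rw [Finset.ssubset_iff_of_subset]
  · refine ⟨v, ?_, ?_⟩
    · simp [h]
    · simp only [Finset.mem_filter, Finset.mem_univ, true_and, Fin.le_def]; omega
  · intro w hw
    simp only [Finset.mem_filter, Finset.mem_univ, true_and, Fin.le_def] at hw ⊢
    exact ⟨by omega, hw.2⟩

lemma key_bound {n : ℕ} (π : Equiv.Perm (Fin n)) (m : ℕ) :
    ∀ v : Fin n, (v : ℕ) + (m + 1) = n →
      (m + 1) + rightCount π v + 1 ≤ 2 ^ nonsepCount π v := by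
  classical
  induction m with
  | zero =>
    intro v hv
    have h1 := rightCount_le π v
    have h2 : ¬ IsSepPair π v := by
      rintro ⟨p, q, r, -, -, hp, -, -⟩
      have := (π p).2
      omega
    have h3 : 1 ≤ nonsepCount π v := by
      unfold nonsepCount
      rw [Nat.succ_le_iff, Finset.card_pos]
      exact ⟨v, by simp [h2]⟩
    have := Nat.pow_le_pow_right (n := 2) (by norm_num) h3
    omega
  | succ m ih =>
    intro v hv
    let u : Fin n := ⟨v + 1, by omega⟩
    have hu : (u : ℕ) = v + 1 := rfl
    have h0 := ih u (by omega)
    by_cases h : IsSepPair π v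
    · have h1 := rightCount_lt π v u hu h
      have h2 := Nat.pow_le_pow_right (n := 2) (by norm_num) (nonsepCount_mono π v u hu)
      omega
    · have h1 := rightCount_le π v
      have h2 := Nat.pow_le_pow_right (n := 2) (by norm_num) (nonsepCount_lt π v u hu h)
      rw [Nat.succ_eq_add_one, pow_succ] at h2
      omega

open Classical in
lemma sep_add {n : ℕ} (π : Equiv.Perm (Fin n)) :
    sep π + (Finset.univ.filter fun w : Fin n => ¬ IsSepPair π w).card = n := by
  have h : sep π = (Finset.univ.filter fun w : Fin n => IsSepPair π w).card := by
    unfold sep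
    rw [← Set.ncard_coe_finset]
    congr 1
    ext; simp
  rw [h, Finset.card_filter_add_card_filter_not]
  simp

lemma sep_le {n : ℕ} (hn : 1 ≤ n) (π : Equiv.Perm (Fin n)) : sep π ≤ n - 1 - Nat.log 2 n := by
  classical
  have h := key_bound π (n - 1) ⟨0, by omega⟩ (by simp; omega)
  have h2 := sep_add π
  have h3 : nonsepCount π ⟨0, by omega⟩ =
      (Finset.univ.filter fun w : Fin n => ¬ IsSepPair π w).card := by
    unfold nonsepCount
    congr 1
    ext w
    simp [Fin.le_def]
  rw [← h3] at h2
  have h4 : Nat.log 2 n < nonsepCount π ⟨0, by omega⟩ := by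
    apply Nat.log_lt_of_lt_pow (by omega)
    omega
  omega

/-- normalized mantissa -/
noncomputable def mant (x : ℕ) : ℚ := (x : ℚ) / 2 ^ Nat.log 2 x

lemma mant_two_mul (x : ℕ) (hx : 1 ≤ x) : mant (2 * x) = mant x := by
  unfold mant
  rw [mul_comm, Nat.log_mul_base (by norm_num) (by omega), pow_succ]
  push_cast
  field_simp

lemma exists_mant (x : ℕ) : 1 ≤ x → (∀ t, x ≠ 2 ^ t) →
    ∃ c, 1 ≤ c ∧ c + 1 < x ∧ mant (2 * c + 1) = mant x := by
  induction x using Nat.strong_induction_on with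
  | _ x ih =>
    intro hx h
    obtain ⟨y, hy | hy⟩ := Nat.even_or_odd' x
    · subst hy
      obtain ⟨c, h1, h2, h3⟩ := ih y (by omega) (by omega) (by
        intro t ht
        apply h (t + 1)
        rw [ht, pow_succ, mul_comm])
      exact ⟨c, h1, by omega, by rw [h3, mant_two_mul y (by omega)]⟩
    · subst hy
      have : y ≠ 0 := by
        rintro rfl
        exact h 0 (by norm_num)
      exact ⟨y, by omega, by omega, rfl⟩

lemma mant_lt (x y : ℕ) (h : Nat.log 2 x = Nat.log 2 y) (hxy : x < y) : mant x < mant y := by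
  unfold mant
  rw [h]
  have : (x : ℚ) < y := by exact_mod_cast hxy
  gcongr

lemma log_same (x y k : ℕ) (h1 : 2 ^ k ≤ x) (h2 : x < y) (h3 : y < 2 ^ (k + 1)) :
    Nat.log 2 x = Nat.log 2 y := by
  rw [Nat.log_eq_of_pow_le_of_lt_pow h1 (by omega),
    Nat.log_eq_of_pow_le_of_lt_pow (by omega) h3]

lemma sepPair_of {n : ℕ} (v : Fin n) (hv : ∀ t, n - (v : ℕ) ≠ 2 ^ t) :
    IsSepPair (Tuple.sort fun w : Fin n => mant (2 * (n - (w : ℕ)) + 1)) v := by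
  set f : Fin n → ℚ := fun w : Fin n => mant (2 * (n - (w : ℕ)) + 1) with hf
  have hmono : Monotone (f ∘ Tuple.sort f) := Tuple.monotone_sort f
  have hlt : ∀ a b : Fin n, f a < f b → (Tuple.sort f).symm a < (Tuple.sort f).symm b := by
    intro a b hab
    by_contra hc
    have := hmono (not_lt.mp hc)
    simp at this
    exact absurd hab (not_lt.mpr this)
  have hvn := v.2
  obtain ⟨c, hc1, hc2, hc3⟩ := exists_mant (n - v) (by omega) hv
  have hk1 := Nat.pow_log_le_self 2 (x := n - v) (by omega)
  have hk2 := Nat.lt_pow_succ_log_self (b := 2) (by norm_num) (n - v)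
  have hk3 := hv (Nat.log 2 (n - v))
  set k := Nat.log 2 (n - (v : ℕ)) with hk
  rw [Nat.succ_eq_add_one, pow_succ] at hk2
  have h4 : 2 ^ (k + 1) = 2 ^ k * 2 := pow_succ 2 k
  have h5 : 2 ^ (k + 1 + 1) = 2 ^ (k + 1) * 2 := pow_succ 2 (k + 1)
  let u : Fin n := ⟨v + 1, by omega⟩
  let w : Fin n := ⟨n - c, by omega⟩
  have hfw : f w = mant (2 * (n - v)) := by
    rw [mant_two_mul _ (by omega), ← hc3]
    simp only [hf, w]
    congr 1
    omega
  have h6 : f u < f w := by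
    rw [hfw]
    simp only [hf, u]
    exact mant_lt _ _ (log_same _ _ (k + 1) (by omega) (by omega) (by omega)) (by omega)
  have h7 : f w < f v := by
    rw [hfw]
    simp only [hf]
    exact mant_lt _ _ (log_same _ _ (k + 1) (by omega) (by omega) (by omega)) (by omega)
  refine ⟨_, _, _, hlt _ _ h6, hlt _ _ h7, ?_, ?_, ?_⟩
  · simp [u]
  · simp [w]; omega
  · simp

lemma le_tau (n : ℕ) (hn : 1 ≤ n) : n - 1 - Nat.log 2 n ≤ tau n := by
  classical
  let π := Tuple.sort fun w : Fin n => mant (2 * (n - (w : ℕ)) + 1)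
  have h1 : sep π ≤ tau n := Finset.le_sup (f := fun π : Equiv.Perm (Fin n) => sep π)
    (Finset.mem_univ π)
  have h2 := sep_add π
  have h3 : (Finset.univ.filter fun w : Fin n => ¬ IsSepPair π w).card ≤
      (Finset.range (Nat.log 2 n + 1)).card := by
    apply Finset.card_le_card_of_injOn (fun w : Fin n => Nat.log 2 (n - (w : ℕ)))
    · intro w _
      simp only [Finset.coe_range, Set.mem_Iio]
      exact Nat.lt_succ_of_le (Nat.log_mono_right (by omega))
    · intro a ha b hb hab
      have key : ∀ a : Fin n, ¬ IsSepPair π a → n - (a : ℕ) = 2 ^ Nat.log 2 (n - (a : ℕ)) := by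
        intro a ha
        by_contra hc
        apply ha
        apply sepPair_of
        intro t ht
        apply hc
        rw [ht, Nat.log_pow (by norm_num)]
      simp at ha hb hab
      have h1 := key a ha
      have h2 := key b hb
      rw [hab, ← h2] at h1
      ext
      omega
  rw [Finset.card_range] at h3
  omega

/-- For every positive `n`, `τ(n) = n - 1 - ⌊log₂ n⌋`. -/
theorem tau_formula (n : ℕ) (hn : 1 ≤ n) : tau n = n - 1 - Nat.log 2 n := by
  apply le_antisymm
  · exact Finset.sup_le fun π _ => sep_le hn π
  · exact le_tau n hn
end

section
/- For every positive integer n, the identity Σ_{j=1}^{n} ⌊(n ∸ 2^{j−1})/2^j⌋ = n − 1 − ⌊log₂(n)⌋ holds, where ∸ denotes truncated (natural-number) subtraction and the division is floor division; note that all summands with 2^{j−1} > n vanish. -/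
theorem sum_floor_aux (n : ℕ) (hn : 1 ≤ n) (m : ℕ) :
    ∑ j ∈ Finset.Icc 1 m, (n - 2 ^ (j - 1)) / 2 ^ j + n / 2 ^ m + min m (Nat.log 2 n + 1) = n := by
  induction m with
  | zero => simp
  | succ m ih =>
    rw [Finset.sum_Icc_succ_top (by omega)]
    have h1 : (n - 2 ^ (m + 1 - 1)) / 2 ^ (m + 1) = (n / 2 ^ m - 1) / 2 := by
      rw [pow_succ, ← Nat.div_div_eq_div_mul, Nat.add_sub_cancel]
      congr 1
      simpa using Nat.sub_mul_div n (2 ^ m) 1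
    have h2 : n / 2 ^ (m + 1) = n / 2 ^ m / 2 := by
      rw [pow_succ, Nat.div_div_eq_div_mul]
    have h3 : m ≤ Nat.log 2 n ↔ 1 ≤ n / 2 ^ m := by
      rw [Nat.le_log_iff_pow_le (by norm_num) (by omega), Nat.le_div_iff_mul_le (by positivity),
        one_mul]
    rw [h1, h2]
    generalize n / 2 ^ m = q at *
    omega

/-- `∑_{j=1}^{n} ⌊(n ∸ 2^(j-1)) / 2^j⌋ = n - 1 - ⌊log₂ n⌋` for positive `n`,
using truncated subtraction and floor division. -/
theorem sum_floor_eq (n : ℕ) (hn : 1 ≤ n) :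
    ∑ j ∈ Finset.Icc 1 n, (n - 2 ^ (j - 1)) / 2 ^ j = n - 1 - Nat.log 2 n := by
  have h := sum_floor_aux n hn n
  have h1 : n / 2 ^ n = 0 := Nat.div_eq_of_lt Nat.lt_two_pow_self
  have h2 : Nat.log 2 n < n := Nat.log_lt_self 2 (by omega)
  omega
end

section
/- If σ is a permutation of length m and τ is a permutation of length k, then the direct sum σ ⊕ τ satisfies sep(σ ⊕ τ) = sep(σ) + sep(τ). -/
/-- direct sum `σ ⊕ τ` of permutations. -/
def dsum {m k : ℕ} (σ : Equiv.Perm (Fin m)) (τ : Equiv.Perm (Fin k)) :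
    Equiv.Perm (Fin (m + k)) :=
  finSumFinEquiv.symm.trans ((Equiv.sumCongr σ τ).trans finSumFinEquiv)

theorem dsum_castAdd {m k : ℕ} (σ : Equiv.Perm (Fin m)) (τ : Equiv.Perm (Fin k)) (i : Fin m) :
    dsum σ τ (Fin.castAdd k i) = Fin.castAdd k (σ i) := by
  simp [dsum]

theorem dsum_natAdd {m k : ℕ} (σ : Equiv.Perm (Fin m)) (τ : Equiv.Perm (Fin k)) (i : Fin k) :
    dsum σ τ (Fin.natAdd m i) = Fin.natAdd m (τ i) := by
  simp [dsum]

theorem isSepPair_castAdd {m k : ℕ} (σ : Equiv.Perm (Fin m)) (τ : Equiv.Perm (Fin k))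
    (v : Fin m) : IsSepPair (dsum σ τ) (Fin.castAdd k v) ↔ IsSepPair σ v := by
  constructor
  · rintro ⟨p, q, r, hpq, hqr, h1, h2, h3⟩
    induction r using Fin.addCases with
    | right r =>
      rw [dsum_natAdd, Fin.ext_iff] at h3
      simp at h3
      omega
    | left r =>
      induction q using Fin.addCases with
      | right q => simp [Fin.lt_def] at hqr; omega
      | left q =>
        induction p using Fin.addCases with
        | right p => simp [Fin.lt_def] at hpq; omega
        | left p =>
          rw [dsum_castAdd] at h1 h2 h3
          refine ⟨p, q, r, hpq, hqr, h1, h2, ?_⟩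
          rw [Fin.ext_iff] at h3 ⊢
          exact h3
  · rintro ⟨p, q, r, hpq, hqr, h1, h2, h3⟩
    refine ⟨Fin.castAdd k p, Fin.castAdd k q, Fin.castAdd k r, hpq, hqr, ?_, ?_, ?_⟩
    · rw [dsum_castAdd]; exact h1
    · rw [dsum_castAdd]; exact h2
    · rw [dsum_castAdd, h3]

theorem isSepPair_natAdd {m k : ℕ} (σ : Equiv.Perm (Fin m)) (τ : Equiv.Perm (Fin k))
    (v : Fin k) : IsSepPair (dsum σ τ) (Fin.natAdd m v) ↔ IsSepPair τ v := by
  constructor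
  · rintro ⟨p, q, r, hpq, hqr, h1, h2, h3⟩
    induction p using Fin.addCases with
    | left p => rw [dsum_castAdd] at h1; simp at h1; omega
    | right p =>
      induction q using Fin.addCases with
      | left q => rw [dsum_castAdd] at h2; simp at h2; omega
      | right q =>
        induction r using Fin.addCases with
        | left r => rw [dsum_castAdd, Fin.ext_iff] at h3; simp at h3; omega
        | right r =>
          rw [dsum_natAdd] at h1 h2 h3
          rw [Fin.ext_iff] at h3
          simp only [Fin.lt_def, Fin.val_natAdd] at hpq hqr h1 h2 h3
          refine ⟨p, q, r, ?_, ?_, ?_, ?_, ?_⟩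
          · rw [Fin.lt_def]; omega
          · rw [Fin.lt_def]; omega
          · omega
          · omega
          · rw [Fin.ext_iff]; omega
  · rintro ⟨p, q, r, hpq, hqr, h1, h2, h3⟩
    rw [Fin.lt_def] at hpq hqr
    refine ⟨Fin.natAdd m p, Fin.natAdd m q, Fin.natAdd m r, ?_, ?_, ?_, ?_, ?_⟩
    · simp only [Fin.lt_def, Fin.val_natAdd]; omega
    · simp only [Fin.lt_def, Fin.val_natAdd]; omega
    · simp only [dsum_natAdd, Fin.val_natAdd]; omega
    · simp only [dsum_natAdd, Fin.val_natAdd]; omega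
    · rw [dsum_natAdd, h3]

/-- `sep (σ ⊕ τ) = sep σ + sep τ`. -/
theorem sep_dsum {m k : ℕ} (σ : Equiv.Perm (Fin m)) (τ : Equiv.Perm (Fin k)) :
    sep (dsum σ τ) = sep σ + sep τ := by
  classical
  have hset : {v : Fin (m + k) | IsSepPair (dsum σ τ) v} =
      Set.image (Fin.castAdd k) {v | IsSepPair σ v} ∪ Set.image (Fin.natAdd m) {v | IsSepPair τ v} := by
    ext v
    constructor
    · intro h
      induction v using Fin.addCases with
      | left v => exact Or.inl ⟨v, (isSepPair_castAdd σ τ v).1 h, rfl⟩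
      | right v => exact Or.inr ⟨v, (isSepPair_natAdd σ τ v).1 h, rfl⟩
    · rintro (⟨v, h, rfl⟩ | ⟨v, h, rfl⟩)
      · exact (isSepPair_castAdd σ τ v).2 h
      · exact (isSepPair_natAdd σ τ v).2 h
  have hdisj : Disjoint (Set.image (Fin.castAdd k) {v | IsSepPair σ v})
      (Set.image (Fin.natAdd m) {v | IsSepPair τ v}) := by
    rw [Set.disjoint_left]
    rintro _ ⟨a, _, rfl⟩ ⟨b, _, hb⟩
    rw [Fin.ext_iff] at hb
    simp at hb
    omega
  unfold sep
  rw [hset, Set.ncard_union_eq hdisj (Set.toFinite _) (Set.toFinite _),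
    Set.ncard_image_of_injective _ (Fin.castAdd_injective m k),
    Set.ncard_image_of_injective _ (Fin.natAdd_injective k m)]
end

section
/- Let σ be a permutation of length m ≥ 1 and τ a permutation of length k ≥ 1, and let π = σ ⊖ τ be their skew sum. If σ(m) = 1 (the last entry of σ is its smallest value), then sep(π) = sep(σ) + sep(τ); otherwise sep(π) = sep(σ) + sep(τ) + 1. -/
/-- skew sum `σ ⊖ τ` of permutations. -/
def ssum {m k : ℕ} (σ : Equiv.Perm (Fin m)) (τ : Equiv.Perm (Fin k)) :
    Equiv.Perm (Fin (m + k)) :=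
  finSumFinEquiv.symm.trans ((Equiv.sumCongr σ τ).trans
    (((Equiv.sumComm (Fin m) (Fin k)).trans finSumFinEquiv).trans
      (finCongr (Nat.add_comm k m))))

theorem ssum_left {m k : ℕ} (σ : Equiv.Perm (Fin m)) (τ : Equiv.Perm (Fin k)) (i : Fin m) :
    (ssum σ τ (Fin.castAdd k i) : ℕ) = k + σ i := by
  simp [ssum, Nat.add_comm]

theorem ssum_right {m k : ℕ} (σ : Equiv.Perm (Fin m)) (τ : Equiv.Perm (Fin k)) (i : Fin k) :
    (ssum σ τ (Fin.natAdd m i) : ℕ) = τ i := by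
  simp [ssum]

theorem isSep_high {m k : ℕ} (σ : Equiv.Perm (Fin m)) (τ : Equiv.Perm (Fin k))
    (v : Fin (m + k)) (i : Fin m) (hv : (v : ℕ) = k + i) :
    IsSepPair (ssum σ τ) v ↔ IsSepPair σ i := by
  constructor
  · rintro ⟨p, q, r, hpq, hqr, hp, hq, hr⟩
    have hr' : (ssum σ τ r : ℕ) = v := by rw [hr]
    induction r using Fin.addCases with
    | right r => rw [ssum_right] at hr'; have := (τ r).2; omega
    | left r =>
      induction q using Fin.addCases with
      | right q => simp only [Fin.lt_def, Fin.val_castAdd, Fin.val_natAdd] at hqr; omega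
      | left q =>
        induction p using Fin.addCases with
        | right p => simp only [Fin.lt_def, Fin.val_castAdd, Fin.val_natAdd] at hpq; omega
        | left p =>
          rw [ssum_left] at hp hq hr'
          refine ⟨p, q, r, hpq, hqr, by omega, by omega, Fin.ext (by omega)⟩
  · rintro ⟨p, q, r, hpq, hqr, hp, hq, hr⟩
    refine ⟨Fin.castAdd k p, Fin.castAdd k q, Fin.castAdd k r, hpq, hqr, ?_, ?_, Fin.ext ?_⟩
    · rw [ssum_left]; omega
    · rw [ssum_left]; omega
    · rw [ssum_left, hr]; omega

theorem isSep_low {m k : ℕ} (hm : 1 ≤ m) (l : Fin m) (hl : (l : ℕ) = m - 1) (σ : Equiv.Perm (Fin m)) (τ : Equiv.Perm (Fin k))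
    (v : Fin (m + k)) (i : Fin k) (hv : (v : ℕ) = i) :
    IsSepPair (ssum σ τ) v ↔
      IsSepPair τ i ∨ ((i : ℕ) + 1 = k ∧ (σ l : ℕ) ≠ 0) := by
  constructor
  · rintro ⟨p, q, r, hpq, hqr, hp, hq, hr⟩
    have hr' : (ssum σ τ r : ℕ) = v := by rw [hr]
    induction r using Fin.addCases with
    | left r => rw [ssum_left] at hr'; omega
    | right r =>
      rw [ssum_right] at hr'
      induction p using Fin.addCases with
      | left p =>
        right
        rw [ssum_left] at hp
        refine ⟨by omega, fun h0 => ?_⟩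
        have hpl : p = l := σ.injective (Fin.ext (by omega))
        have hpv : (p : ℕ) = m - 1 := by rw [hpl, hl]
        induction q using Fin.addCases with
        | left q => simp only [Fin.lt_def, Fin.val_castAdd, Fin.val_natAdd] at hpq; omega
        | right q => rw [ssum_right] at hq; have := (τ q).2; omega
      | right p =>
        induction q using Fin.addCases with
        | left q => simp only [Fin.lt_def, Fin.val_castAdd, Fin.val_natAdd] at hpq; omega
        | right q =>
          left
          rw [ssum_right] at hp hq
          simp only [Fin.lt_def, Fin.val_natAdd] at hpq hqr
          refine ⟨p, q, r, Fin.lt_def.2 (by omega), Fin.lt_def.2 (by omega), by omega, by omega,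
            Fin.ext (by omega)⟩
  · rintro (⟨p, q, r, hpq, hqr, hp, hq, hr⟩ | ⟨hi, h0⟩)
    · refine ⟨Fin.natAdd m p, Fin.natAdd m q, Fin.natAdd m r, ?_, ?_, ?_, ?_, Fin.ext ?_⟩
      · simpa using hpq
      · simpa using hqr
      · rw [ssum_right]; omega
      · rw [ssum_right]; omega
      · rw [ssum_right, hr]; omega
    · have hz : (σ (σ.symm ⟨0, by omega⟩) : ℕ) = 0 := by simp
      have hne : (σ.symm ⟨0, by omega⟩ : Fin m) ≠ l := by
        intro h; rw [h] at hz; exact h0 hz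
      have hne' : ((σ.symm ⟨0, by omega⟩ : Fin m) : ℕ) ≠ m - 1 := fun h => hne (Fin.ext (h.trans hl.symm))
      refine ⟨Fin.castAdd k (σ.symm ⟨0, by omega⟩), Fin.castAdd k l,
        Fin.natAdd m (τ.symm i), ?_, ?_, ?_, ?_, Fin.ext ?_⟩
      · simp only [Fin.lt_def, Fin.val_castAdd]; omega
      · simp only [Fin.lt_def, Fin.val_castAdd, Fin.val_natAdd]; omega
      · rw [ssum_left]; omega
      · rw [ssum_left]; omega
      · rw [ssum_right]; simp [hv]

open Classical in
theorem sep_eq_sum {n : ℕ} (π : Equiv.Perm (Fin n)) :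
    sep π = ∑ v : Fin n, if IsSepPair π v then 1 else 0 := by
  rw [sep, Set.ncard_eq_toFinset_card']
  simp

theorem not_isSep_top {k : ℕ} (τ : Equiv.Perm (Fin k)) (i : Fin k) (hi : (i : ℕ) + 1 = k) :
    ¬ IsSepPair τ i := by
  rintro ⟨p, q, r, hpq, hqr, hp, hq, hr⟩
  have := (τ p).2
  omega

open Classical in
theorem sep_ssum_aux {m k : ℕ} (hm : 1 ≤ m) (l : Fin m) (hl : (l : ℕ) = m - 1)
    (t : Fin k) (ht : (t : ℕ) + 1 = k)
    (σ : Equiv.Perm (Fin m)) (τ : Equiv.Perm (Fin k)) :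
    sep (ssum σ τ) = sep σ + sep τ + if (σ l : ℕ) ≠ 0 then 1 else 0 := by
  rw [sep_eq_sum, sep_eq_sum σ, sep_eq_sum τ,
    ← Equiv.sum_comp (finCongr (Nat.add_comm k m)), Fin.sum_univ_add]
  have h1 : ∀ i : Fin m, IsSepPair (ssum σ τ) (finCongr (Nat.add_comm k m) (Fin.natAdd k i)) ↔
      IsSepPair σ i := fun i => isSep_high σ τ _ i (by simp [Nat.add_comm])
  have h2 : ∀ i : Fin k,
      (if IsSepPair (ssum σ τ) (finCongr (Nat.add_comm k m) (Fin.castAdd m i)) then 1 else 0) =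
      (if IsSepPair τ i then 1 else 0) + (if i = t then
        (if (σ l : ℕ) ≠ 0 then 1 else 0) else 0) := by
    intro i
    have e : i = t ↔ (i : ℕ) + 1 = k := by rw [Fin.ext_iff]; omega
    rw [if_congr (isSep_low hm l hl σ τ _ i (by simp)) rfl rfl, if_congr e rfl rfl]
    by_cases hi : (i : ℕ) + 1 = k
    · simp [hi, not_isSep_top τ i hi]
    · simp [hi]
  simp only [h1]
  rw [Finset.sum_congr rfl (fun i _ => h2 i), Finset.sum_add_distrib, Finset.sum_ite_eq']
  simp only [Finset.mem_univ, if_true]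
  omega

/-- For the skew sum `π = σ ⊖ τ` of nonempty permutations: if the last entry of
`σ` is its smallest value then `sep π = sep σ + sep τ`, and otherwise
`sep π = sep σ + sep τ + 1`. -/
theorem sep_ssum {m k : ℕ} (hm : 1 ≤ m) (hk : 1 ≤ k)
    (σ : Equiv.Perm (Fin m)) (τ : Equiv.Perm (Fin k)) :
    ((σ ⟨m - 1, by omega⟩ : ℕ) = 0 → sep (ssum σ τ) = sep σ + sep τ) ∧
    ((σ ⟨m - 1, by omega⟩ : ℕ) ≠ 0 → sep (ssum σ τ) = sep σ + sep τ + 1) := by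
  rw [sep_ssum_aux hm ⟨m - 1, by omega⟩ rfl ⟨k - 1, by omega⟩ (Nat.sub_add_cancel hk)]
  constructor
  · intro h; rw [if_neg (not_not.2 h)]; rfl
  · intro h; rw [if_pos h]
end

section
/- For every positive integer n and every integer t ≥ 0, the number of permutations of length n with exactly t separated pairs equals T(n,t), the number of Parker sequences of length n with exactly t descents; i.e. #{π ∈ S_n : sep(π) = t} = #{(a_1,…,a_n) : 1 ≤ a_i ≤ i for all i, and exactly t indices i ∈ {1,…,n−1} satisfy a_i > a_{i+1}}. -/
/-- Values `w > v` placed to the right of `v`; `σ` gives the position of each value. -/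
def rightSet {n : ℕ} (σ : Equiv.Perm (Fin n)) (v : Fin n) : Finset (Fin n) :=
  Finset.univ.filter (fun w => v < w ∧ σ v < σ w)

theorem mem_rightSet {n : ℕ} (σ : Equiv.Perm (Fin n)) (v w : Fin n) :
    w ∈ rightSet σ v ↔ v < w ∧ σ v < σ w := by
  simp [rightSet]

theorem rightSet_card_lt {n : ℕ} (σ : Equiv.Perm (Fin n)) (i : Fin n) :
    (rightSet σ i.rev).card < (i : ℕ) + 1 := by
  have h : rightSet σ i.rev ⊆ Finset.Ioi i.rev := by
    intro w hw
    rw [mem_rightSet] at hw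
    simpa using hw.1
  have h2 := Finset.card_le_card h
  rw [Fin.card_Ioi, Fin.val_rev] at h2
  omega

theorem rightSet_agree {n : ℕ} (σ τ : Equiv.Perm (Fin n))
    (h : ∀ v, (rightSet σ v).card = (rightSet τ v).card) :
    ∀ k : ℕ, ∀ v : Fin n, n - (v : ℕ) ≤ k → rightSet σ v = rightSet τ v := by
  intro k
  induction k with
  | zero => intro v hv; have := v.isLt; omega
  | succ k ih =>
    intro v hv
    have agree : ∀ u w : Fin n, v < u → v < w → (σ u < σ w → τ u < τ w) := by
      intro u w hu hw huw
      rcases lt_trichotomy u w with h1 | h1 | h1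
      · have e := ih u (by have := Fin.lt_def.1 hu; omega)
        have : w ∈ rightSet σ u := (mem_rightSet _ _ _).2 ⟨h1, huw⟩
        rw [e, mem_rightSet] at this
        exact this.2
      · subst h1; exact absurd huw (lt_irrefl _)
      · have e := ih w (by have := Fin.lt_def.1 hw; omega)
        by_contra hc
        have h3 : τ w < τ u := lt_of_le_of_ne (not_lt.1 hc) (fun h => h1.ne (τ.injective h))
        have : u ∈ rightSet τ w := (mem_rightSet _ _ _).2 ⟨h1, h3⟩
        rw [← e, mem_rightSet] at this
        exact lt_asymm this.2 huw
    by_cases hs : rightSet σ v ⊆ rightSet τ v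
    · exact Finset.eq_of_subset_of_card_le hs (h v).ge
    · symm
      apply Finset.eq_of_subset_of_card_le _ (h v).le
      obtain ⟨u, hu, hu'⟩ := Finset.not_subset.1 hs
      rw [mem_rightSet] at hu hu'
      intro w hw
      rw [mem_rightSet] at hw ⊢
      refine ⟨hw.1, ?_⟩
      by_contra hc
      have h1 : σ w < σ u := lt_of_le_of_lt (not_lt.1 hc) hu.2
      have h2 := agree w u hw.1 hu.1 h1
      exact hu' ⟨hu.1, hw.2.trans h2⟩

theorem eq_of_rightSet_card {n : ℕ} (σ τ : Equiv.Perm (Fin n))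
    (h : ∀ v, (rightSet σ v).card = (rightSet τ v).card) : σ = τ := by
  have e : ∀ v, rightSet σ v = rightSet τ v := fun v => rightSet_agree σ τ h _ v le_rfl
  have agree : ∀ u w : Fin n, σ u < σ w → τ u < τ w := by
    intro u w huw
    rcases lt_trichotomy u w with h1 | h1 | h1
    · have : w ∈ rightSet σ u := (mem_rightSet _ _ _).2 ⟨h1, huw⟩
      rw [e, mem_rightSet] at this
      exact this.2
    · subst h1; exact absurd huw (lt_irrefl _)
    · by_contra hc
      have h3 : τ w < τ u := lt_of_le_of_ne (not_lt.1 hc) (fun h => h1.ne (τ.injective h))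
      have : u ∈ rightSet τ w := (mem_rightSet _ _ _).2 ⟨h1, h3⟩
      rw [← e, mem_rightSet] at this
      exact lt_asymm this.2 huw
  have hm : StrictMono (σ.symm.trans τ) := by
    intro x y hxy
    apply agree
    simpa using hxy
  have := (StrictMono.range_inj (f := σ.symm.trans τ) (g := id) hm strictMono_id).1
    (by rw [(σ.symm.trans τ).surjective.range_eq]; simp)
  ext v
  have h2 := congrFun this (σ v)
  simp at h2
  rw [h2]

/-- The code of a permutation. -/
def sepCode {n : ℕ} (π : Equiv.Perm (Fin n)) : ∀ i : Fin n, Fin ((i : ℕ) + 1) :=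
  fun i => ⟨(rightSet π.symm i.rev).card, rightSet_card_lt _ i⟩

theorem sepCode_injective {n : ℕ} : Function.Injective (sepCode (n := n)) := by
  intro π ρ h
  have : π.symm = ρ.symm := by
    apply eq_of_rightSet_card
    intro v
    have h1 := congrArg Fin.val (congrFun h v.rev)
    simpa [sepCode] using h1
  simpa using congrArg Equiv.symm this

theorem sepCode_bijective {n : ℕ} : Function.Bijective (sepCode (n := n)) := by
  rw [Fintype.bijective_iff_injective_and_card]
  refine ⟨sepCode_injective, ?_⟩
  rw [Fintype.card_perm, Fintype.card_pi]
  simp only [Fintype.card_fin]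
  rw [Fin.prod_univ_eq_prod_range (fun i => i + 1) n, Finset.prod_range_add_one_eq_factorial]

theorem isSepPair_iff {n : ℕ} (π : Equiv.Perm (Fin n)) (v : Fin n) (u : Fin n)
    (hu : (u : ℕ) = (v : ℕ) + 1) :
    IsSepPair π v ↔ (rightSet π.symm v).card < (rightSet π.symm u).card := by
  have hvu : v < u := by rw [Fin.lt_def]; omega
  rcases lt_or_gt_of_ne (fun h => hvu.ne (π.symm.injective h) : π.symm v ≠ π.symm u) with h | h
  · constructor
    · rintro ⟨p, q, r, hpq, hqr, hp, hq, hr⟩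
      have hp' : π p = u := Fin.ext (by omega)
      rw [← hp', ← hr] at h
      simp at h
      exact absurd (hpq.trans hqr) (lt_asymm h)
    · intro hc
      exfalso
      have : rightSet π.symm u ⊆ rightSet π.symm v := by
        intro w hw
        rw [mem_rightSet] at hw ⊢
        exact ⟨hvu.trans hw.1, h.trans hw.2⟩
      have := Finset.card_le_card this
      omega
  · have hsub : rightSet π.symm v ⊆ rightSet π.symm u := by
      intro w hw
      rw [mem_rightSet] at hw ⊢
      refine ⟨?_, h.trans hw.2⟩
      have h1 : w ≠ u := by rintro rfl; exact lt_asymm h hw.2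
      have h2 : (w : ℕ) ≠ u := fun h => h1 (Fin.ext h)
      have h3 := Fin.lt_def.1 hw.1
      rw [Fin.lt_def]; omega
    constructor
    · rintro ⟨p, q, r, hpq, hqr, hp, hq, hr⟩
      have hp' : π p = u := Fin.ext (by omega)
      apply Finset.card_lt_card
      refine (Finset.ssubset_iff_of_subset hsub).2 ⟨π q, ?_, ?_⟩
      · rw [mem_rightSet, ← hp']
        refine ⟨by rw [Fin.lt_def]; omega, by simpa using hpq⟩
      · rw [mem_rightSet, ← hr]
        simp only [Equiv.symm_apply_apply]
        exact fun h => lt_asymm hqr h.2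
    · intro hc
      obtain ⟨w, hw, hw'⟩ := Finset.exists_mem_notMem_of_card_lt_card hc
      rw [mem_rightSet] at hw hw'
      have h1 : ¬ π.symm v < π.symm w := fun h => hw' ⟨hvu.trans hw.1, h⟩
      have h2 : π.symm w ≠ π.symm v := fun h => (hvu.trans hw.1).ne' (π.symm.injective h)
      refine ⟨π.symm u, π.symm w, π.symm v, hw.2, lt_of_le_of_ne (not_lt.1 h1) h2, ?_, ?_, ?_⟩
      · simpa using hu
      · have := Fin.lt_def.1 hw.1
        simp; omega
      · simp

theorem sep_eq_descents {n : ℕ} (π : Equiv.Perm (Fin n)) (a : Fin n → ℕ)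
    (ha : ∀ i, a i = (sepCode π i : ℕ) + 1) :
    {i : Fin n | ∃ h : (i : ℕ) + 1 < n, a i > a ⟨(i : ℕ) + 1, h⟩}.ncard = sep π := by
  have key : ∀ i : Fin n, ∀ h : (i : ℕ) + 1 < n,
      (a i > a ⟨(i : ℕ) + 1, h⟩ ↔ IsSepPair π (Fin.rev ⟨(i : ℕ) + 1, h⟩)) := by
    intro i h
    rw [isSepPair_iff π _ i.rev (by simp only [Fin.val_rev]; omega), ha, ha]
    simp [sepCode]
  unfold sep
  refine Set.ncard_congr (fun i hi => Fin.rev ⟨(i : ℕ) + 1, hi.1⟩) ?_ ?_ ?_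
  · rintro i ⟨h, hi⟩
    exact (key i h).1 hi
  · rintro i j hi hj hij
    have := Fin.rev_injective hij
    simp at this
    exact Fin.ext this
  · intro v hv
    obtain ⟨p, q, r, -, -, hp, -, -⟩ := id hv
    have hlt := (π p).isLt
    have h1 : n - 2 - (v : ℕ) + 1 < n := by omega
    have e : Fin.rev ⟨n - 2 - (v : ℕ) + 1, h1⟩ = v := by
      apply Fin.ext; rw [Fin.val_rev]; simp only []; omega
    refine ⟨⟨n - 2 - (v : ℕ), by omega⟩, ⟨h1, ?_⟩, e⟩
    refine (key ⟨n - 2 - (v : ℕ), by omega⟩ h1).2 ?_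
    rw [e]; exact hv

/-- The number of permutations of length `n` with exactly `t` separated pairs
equals the number of Parker sequences `(a₁,…,aₙ)` (with `1 ≤ aᵢ ≤ i`) having
exactly `t` descents (indices `i ∈ {1,…,n-1}` with `aᵢ > aᵢ₊₁`).
Here `a : Fin n → ℕ` is `0`-indexed, so `a i` is `a_{i+1}`. -/
theorem card_sep_eq_parker (n t : ℕ) (hn : 1 ≤ n) :
    Nat.card {π : Equiv.Perm (Fin n) // sep π = t} =
      Nat.card {a : Fin n → ℕ //
        (∀ i : Fin n, 1 ≤ a i ∧ a i ≤ (i : ℕ) + 1) ∧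
        {i : Fin n | ∃ h : (i : ℕ) + 1 < n, a i > a ⟨(i : ℕ) + 1, h⟩}.ncard = t} := by

  refine Nat.card_congr (Equiv.ofBijective
    (fun π => ⟨fun i => (sepCode π.1 i : ℕ) + 1, fun i => ?_, ?_⟩) ⟨?_, ?_⟩)
  · have := (sepCode π.1 i).isLt
    exact ⟨Nat.le_add_left _ _, this⟩
  · exact (sep_eq_descents π.1 _ (fun i => rfl)).trans π.2
  · intro π ρ h
    apply Subtype.ext
    apply sepCode_injective
    funext i
    have := congrFun (congrArg Subtype.val h) i
    apply Fin.ext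
    simpa using this
  · rintro ⟨a, ha, hd⟩
    obtain ⟨π, hπ⟩ := sepCode_bijective.2
      (fun i => (⟨a i - 1, by have := ha i; omega⟩ : Fin ((i : ℕ) + 1)))
    have hc : ∀ i, a i = (sepCode π i : ℕ) + 1 := by
      intro i
      have := ha i
      rw [hπ]; simp only []; omega
    refine ⟨⟨π, (sep_eq_descents π a hc).symm.trans hd⟩, ?_⟩
    apply Subtype.ext
    funext i
    exact (hc i).symm
end

section
/- For every positive integer n and every integer k ≥ 1, the number of permutations of length n that are sortable by at most k passes through the stack equals Σ_{j=0}^{k−1} T(n,j); i.e. #{π ∈ S_n : sep(π) ≤ k−1} = Σ_{j=0}^{k−1} T(n,j). -/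
/-- `T n t` is the number of Parker sequences of length `n` (tuples
`(a₁,…,aₙ)` with `1 ≤ aᵢ ≤ i`, here `0`-indexed) with exactly `t` descents. -/
noncomputable def T (n t : ℕ) : ℕ :=
  Nat.card {a : Fin n → ℕ //
    (∀ i : Fin n, 1 ≤ a i ∧ a i ≤ (i : ℕ) + 1) ∧
    {i : Fin n | ∃ h : (i : ℕ) + 1 < n, a i > a ⟨(i : ℕ) + 1, h⟩}.ncard = t}

/-- The set of larger values standing to the right of value `v`. -/
def bset {n : ℕ} (π : Equiv.Perm (Fin n)) (v : Fin n) : Finset (Fin n) :=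
  Finset.univ.filter (fun w => v < w ∧ π.symm v < π.symm w)

lemma bset_card_lt {n : ℕ} (π : Equiv.Perm (Fin n)) (v : Fin n) :
    (bset π v).card < n - v := by
  have h : bset π v ⊆ Finset.Ioi v := by
    intro w hw
    simp only [bset, Finset.mem_filter] at hw
    simpa using hw.2.1
  have h2 := Finset.card_le_card h
  rw [Fin.card_Ioi] at h2
  have := v.2
  omega

lemma code_step {n : ℕ} (π ρ : Equiv.Perm (Fin n)) (v : Fin n)
    (hc : (bset π v).card = (bset ρ v).card)
    (ih : ∀ w u, v < w → v < u → (π.symm w < π.symm u ↔ ρ.symm w < ρ.symm u))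
    (w : Fin n) (hw : v < w) (h : π.symm v < π.symm w) : ρ.symm v < ρ.symm w := by
  by_contra hn
  have hne : ρ.symm w ≠ ρ.symm v := fun e => hw.ne' (ρ.symm.injective e)
  have hlt : ρ.symm w < ρ.symm v := lt_of_le_of_ne (not_lt.1 hn) hne
  have hss : bset ρ v ⊂ bset π v := by
    rw [Finset.ssubset_iff_of_subset]
    · refine ⟨w, ?_, ?_⟩ <;> simp [bset, hw, h, hlt.le]
    · intro u hu
      simp only [bset, Finset.mem_filter, Finset.mem_univ, true_and] at hu ⊢
      refine ⟨hu.1, h.trans ?_⟩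
      rw [ih w u hw hu.1]
      exact hlt.trans hu.2
  have := Finset.card_lt_card hss
  omega

lemma code_inj {n : ℕ} (π ρ : Equiv.Perm (Fin n))
    (hc : ∀ v, (bset π v).card = (bset ρ v).card) : π = ρ := by
  have key : ∀ m : ℕ, ∀ w u : Fin n, n ≤ w + m → n ≤ u + m →
      (π.symm w < π.symm u ↔ ρ.symm w < ρ.symm u) := by
    intro m
    induction m with
    | zero => intro w u hw; have := w.2; omega
    | succ m ih =>
      have aux : ∀ v w : Fin n, n ≤ v + (m + 1) → v < w →
          (π.symm v < π.symm w ↔ ρ.symm v < ρ.symm w) := by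
        intro v w hv hw
        have ih' : ∀ w u, v < w → v < u →
            (π.symm w < π.symm u ↔ ρ.symm w < ρ.symm u) := by
          intro w u h1 h2
          apply ih <;> omega
        exact ⟨code_step π ρ v (hc v) ih' w hw,
          code_step ρ π v (hc v).symm (fun a b ha hb => (ih' a b ha hb).symm) w hw⟩
      intro w u hw hu
      rcases lt_trichotomy w u with h | h | h
      · exact aux w u hw h
      · subst h; simp
      · have h1 := aux u w hu h
        have n1 : π.symm w ≠ π.symm u := fun e => h.ne' (π.symm.injective e)
        have n2 : ρ.symm w ≠ ρ.symm u := fun e => h.ne' (ρ.symm.injective e)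
        constructor
        · intro hh
          exact lt_of_le_of_ne (not_lt.1 (fun h2 => absurd (h1.2 h2) hh.not_gt)) n2
        · intro hh
          exact lt_of_le_of_ne (not_lt.1 (fun h2 => absurd (h1.1 h2) hh.not_gt)) n1
  have key' : ∀ w u : Fin n, (π.symm w < π.symm u ↔ ρ.symm w < ρ.symm u) :=
    fun w u => key n w u (by omega) (by omega)
  have hm : StrictMono (fun x => ρ.symm (π x)) := by
    intro x y hxy
    have := (key' (π x) (π y)).1 (by simpa using hxy)
    exact this
  have hid : (fun x => ρ.symm (π x)) = id := by
    have hsurj : Function.Surjective (fun x => ρ.symm (π x)) :=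
      ρ.symm.surjective.comp π.surjective
    have : StrictMono.orderIsoOfSurjective _ hm hsurj = OrderIso.refl _ := Subsingleton.elim _ _
    funext x
    exact congrArg (fun e : Fin n ≃o Fin n => e x) this
  ext x
  have := congrFun hid x
  simp only [id] at this
  rw [Equiv.symm_apply_eq] at this
  rw [this]

lemma sep_iff {n : ℕ} (π : Equiv.Perm (Fin n)) (v : Fin n) (h : (v : ℕ) + 1 < n) :
    IsSepPair π v ↔ (bset π v).card < (bset π ⟨v + 1, h⟩).card := by
  set v' : Fin n := ⟨v + 1, h⟩ with hv'
  have hvv : v < v' := by simp [hv', Fin.lt_def]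
  have hsucc : ∀ w : Fin n, v < w → w ≠ v' → v' < w := by
    intro w h1 h2
    have : (w : ℕ) ≠ v + 1 := fun e => h2 (Fin.ext e)
    simp only [Fin.lt_def, hv'] at *
    omega
  constructor
  · rintro ⟨p, q, r, hpq, hqr, hp, hq, hr⟩
    have hp' : π.symm v' = p := by
      rw [Equiv.symm_apply_eq]; exact Fin.ext hp.symm
    have hr' : π.symm v = r := by
      rw [Equiv.symm_apply_eq]; exact hr.symm
    apply Finset.card_lt_card
    rw [Finset.ssubset_iff_of_subset]
    · refine ⟨π q, ?_, ?_⟩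
      · simp only [bset, Finset.mem_filter, Finset.mem_univ, true_and, Equiv.symm_apply_apply, hp']
        exact ⟨hq, hpq⟩
      · simp only [bset, Finset.mem_filter, Finset.mem_univ, true_and, Equiv.symm_apply_apply, hr']
        exact fun hh => absurd hh.2 hqr.not_gt
    · intro w hw
      simp only [bset, Finset.mem_filter, Finset.mem_univ, true_and, hr', hp'] at hw ⊢
      refine ⟨hsucc w hw.1 ?_, (hpq.trans hqr).trans hw.2⟩
      rintro rfl
      rw [hp'] at hw
      exact absurd hw.2 (hpq.trans hqr).not_gt
  · intro hc
    obtain ⟨w, hw, hw2⟩ := Finset.exists_mem_notMem_of_card_lt_card hc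
    simp only [bset, Finset.mem_filter, Finset.mem_univ, true_and] at hw hw2
    have hlt : π.symm w < π.symm v := by
      refine lt_of_le_of_ne (not_lt.1 fun hh => hw2 ⟨hvv.trans hw.1, hh⟩) ?_
      intro e
      exact (hvv.trans hw.1).ne' (π.symm.injective e)
    refine ⟨π.symm v', π.symm w, π.symm v, hw.2, hlt, ?_, ?_, ?_⟩
    · simp [hv']
    · have := hw.1
      simpa [hv', Fin.lt_def] using this
    · simp

/-- The code of a permutation. -/
def code {n : ℕ} (π : Equiv.Perm (Fin n)) : (i : Fin n) → Fin (i + 1) :=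
  fun i => ⟨(bset π i.rev).card, by
    have := bset_card_lt π i.rev
    rw [Fin.val_rev] at this
    have := i.2
    omega⟩

lemma code_bij {n : ℕ} : Function.Bijective (code (n := n)) := by
  rw [Fintype.bijective_iff_injective_and_card]
  constructor
  · intro π ρ h
    apply code_inj
    intro v
    have := congrArg Fin.val (congrFun h v.rev)
    simpa [code] using this
  · rw [Fintype.card_perm, Fintype.card_pi]
    simp only [Fintype.card_fin]
    rw [Fin.prod_univ_eq_prod_range (fun i => i + 1) n, Finset.prod_range_add_one_eq_factorial]

/-- Descent set, as in the definition of `T`. -/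
def dset {n : ℕ} (a : Fin n → ℕ) : Set (Fin n) :=
  {i : Fin n | ∃ h : (i : ℕ) + 1 < n, a i > a ⟨(i : ℕ) + 1, h⟩}

lemma sep_lt {n : ℕ} (π : Equiv.Perm (Fin n)) (v : Fin n) (h : IsSepPair π v) :
    (v : ℕ) + 1 < n := by
  obtain ⟨p, q, r, _, _, _, hq, _⟩ := h
  have := (π q).2
  omega

lemma sep_eq_s17 {n : ℕ} (π : Equiv.Perm (Fin n)) :
    sep π = (dset (fun i => (code π i : ℕ) + 1)).ncard := by
  have hmem : ∀ (v : Fin n) (h : (v : ℕ) + 1 < n), IsSepPair π v ↔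
      (⟨n - 2 - v, by omega⟩ : Fin n) ∈ dset (fun i => (code π i : ℕ) + 1) := by
    intro v h
    rw [sep_iff π v h]
    have e1 : (⟨n - 2 - v, by omega⟩ : Fin n).rev = ⟨v + 1, h⟩ := by
      apply Fin.ext; simp only [Fin.val_rev]; omega
    have e2 : (⟨n - 2 - v + 1, by omega⟩ : Fin n).rev = v := by
      apply Fin.ext; simp only [Fin.val_rev]; omega
    simp only [dset, code, Set.mem_ofPred_eq, e1, e2]
    constructor
    · intro hh
      exact ⟨by omega, by omega⟩
    · rintro ⟨_, hh⟩
      omega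
  unfold sep
  refine Set.ncard_congr (fun v hv => ⟨n - 2 - v, by have := v.2; omega⟩) ?_ ?_ ?_
  · intro v hv
    exact (hmem v (sep_lt π v hv)).1 hv
  · intro v w hv hw he
    have h1 := sep_lt π v hv
    have h2 := sep_lt π w hw
    simp only [Fin.mk.injEq] at he
    apply Fin.ext
    omega
  · intro i hi
    obtain ⟨h, -⟩ := id hi
    have e : (⟨n - 2 - (n - 2 - i), by omega⟩ : Fin n) = i := by
      apply Fin.ext; simp only; omega
    refine ⟨⟨n - 2 - i, by omega⟩, ?_, e⟩
    refine (hmem _ (by simp only; omega)).2 ?_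
    simpa only [e] using hi

lemma T_eq (n t : ℕ) : T n t = Nat.card {π : Equiv.Perm (Fin n) // sep π = t} := by
  symm
  unfold T
  refine Nat.card_congr (Equiv.ofBijective
    (fun π => ⟨fun i => (code π.1 i : ℕ) + 1, ⟨fun i => ⟨Nat.le_add_left 1 _, ?_⟩, ?_⟩⟩) ⟨?_, ?_⟩)
  · have := (code π.1 i).2
    exact this
  · exact (sep_eq_s17 π.1).symm.trans π.2
  · intro π ρ h
    apply Subtype.ext
    apply code_bij.1
    funext i
    have := congrFun (congrArg Subtype.val h) i
    apply Fin.ext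
    simpa using this
  · rintro ⟨a, ha, hd⟩
    obtain ⟨π, hπ⟩ := code_bij.2 (fun i => (⟨a i - 1, by have := ha i; omega⟩ : Fin (i + 1)))
    have e : (fun i => (code π i : ℕ) + 1) = a := by
      funext i
      have := ha i
      rw [hπ]
      simp only
      omega
    refine ⟨⟨π, ?_⟩, Subtype.ext e⟩
    rw [sep_eq_s17, e]
    exact hd

/-- The number of permutations of length `n` sortable in at most `k` passes
(i.e. with at most `k - 1` separated pairs) is `∑_{j=0}^{k-1} T(n,j)`. -/
theorem card_k_pass_sortable (n k : ℕ) (hn : 1 ≤ n) (hk : 1 ≤ k) :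
    Nat.card {π : Equiv.Perm (Fin n) // sep π ≤ k - 1} =
      ∑ j ∈ Finset.range k, T n j := by
  classical
  simp only [T_eq, Nat.card_eq_fintype_card, Fintype.card_subtype]
  rw [Finset.card_eq_sum_card_fiberwise (f := fun π => sep π) (t := Finset.range k)]
  · refine Finset.sum_congr rfl fun j hj => ?_
    congr 1
    ext π
    simp only [Finset.mem_range] at hj
    simp only [Finset.mem_filter, Finset.mem_univ, true_and]
    omega
  · intro π hπ
    simp at hπ ⊢
    omega
end

section
/- For all integers n ≥ 1, t ≥ 0 and 1 ≤ k ≤ n+1, the counts P satisfy the recurrence P(n+1, t, k) = Σ_{j=k−1}^{n} P(n, t, j) + Σ_{j=1}^{k−2} P(n, t−1, j), where terms P(n, t−1, j) are interpreted as 0 when t = 0 and the first sum starts at j = max(k−1, 1). -/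
/-- `P n t k` is the number of permutations of length `n` with exactly `t`
separated pairs whose `1` is in the `k`-th position (1-based; so 0-based the
entry at index `k - 1` is the value `0`). -/
noncomputable def P (n t k : ℕ) : ℕ :=
  Nat.card {π : Equiv.Perm (Fin n) //
    sep π = t ∧ ∃ h : k - 1 < n, (π ⟨k - 1, h⟩ : ℕ) = 0}

/-- insert the new minimum at position `k`. -/
def insMin {n : ℕ} (k : Fin (n + 1)) (σ : Equiv.Perm (Fin n)) : Equiv.Perm (Fin (n + 1)) :=
  ((finSuccEquiv' k).trans σ.optionCongr).trans (finSuccEquiv' 0).symm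

lemma insMin_self {n : ℕ} (k : Fin (n + 1)) (σ : Equiv.Perm (Fin n)) : insMin k σ k = 0 := by
  simp [insMin]

lemma insMin_succAbove {n : ℕ} (k : Fin (n + 1)) (σ : Equiv.Perm (Fin n)) (x : Fin n) :
    insMin k σ (k.succAbove x) = (σ x).succ := by
  simp [insMin]

lemma insMin_injective {n : ℕ} (k : Fin (n + 1)) : Function.Injective (insMin k) := by
  intro σ τ h
  ext x
  have := congrArg (fun e => e (k.succAbove x)) h
  simp only [insMin_succAbove] at this
  rw [Fin.succ_injective _ this]

lemma insMin_surj {n : ℕ} (k : Fin (n + 1)) (π : Equiv.Perm (Fin (n + 1))) (h : π k = 0) :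
    ∃ σ, insMin k σ = π := by
  let e : Equiv.Perm (Option (Fin n)) :=
    ((finSuccEquiv' k).symm.trans π).trans (finSuccEquiv' 0)
  have he : e none = none := by simp [e, h]
  have h2 : (Equiv.removeNone e).optionCongr = e := by
    rw [map_equiv_removeNone, he, Equiv.swap_self]; rfl
  refine ⟨Equiv.removeNone e, ?_⟩
  unfold insMin
  rw [h2]
  ext x
  simp [e]

lemma isSep_succ {n : ℕ} (k : Fin (n + 1)) (σ : Equiv.Perm (Fin n)) (v : Fin n) :
    IsSepPair (insMin k σ) v.succ ↔ IsSepPair σ v := by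
  constructor
  · rintro ⟨p, q, r, hpq, hqr, hp, hq, hr⟩
    have key : ∀ x, (insMin k σ x : ℕ) ≠ 0 → ∃ y, x = k.succAbove y := by
      intro x hx
      have : x ≠ k := by
        rintro rfl
        simp [insMin_self] at hx
      obtain ⟨y, hy⟩ := Fin.exists_succAbove_eq this
      exact ⟨y, hy.symm⟩
    obtain ⟨p, rfl⟩ := key p (by omega)
    obtain ⟨q, rfl⟩ := key q (by omega)
    obtain ⟨r, rfl⟩ := key r (by rw [hr]; simp)
    simp only [insMin_succAbove, Fin.val_succ] at hp hq hr
    refine ⟨p, q, r, (Fin.strictMono_succAbove k).lt_iff_lt.1 hpq,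
      (Fin.strictMono_succAbove k).lt_iff_lt.1 hqr, by omega, by omega, Fin.succ_injective _ hr⟩
  · rintro ⟨p, q, r, hpq, hqr, hp, hq, hr⟩
    refine ⟨k.succAbove p, k.succAbove q, k.succAbove r, Fin.strictMono_succAbove k hpq,
      Fin.strictMono_succAbove k hqr, ?_, ?_, ?_⟩
    · simp only [insMin_succAbove, Fin.val_succ]; omega
    · simp only [insMin_succAbove, Fin.val_succ]; omega
    · simp only [insMin_succAbove, hr]

lemma isSep_zero {n : ℕ} (k : Fin (n + 2)) (σ : Equiv.Perm (Fin (n + 1))) :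
    IsSepPair (insMin k σ) 0 ↔ (σ.symm 0 : ℕ) + 1 < k := by
  have h1 : insMin k σ (k.succAbove (σ.symm 0)) = 1 := by
    rw [insMin_succAbove]; simp
  constructor
  · rintro ⟨p, q, r, hpq, hqr, hp, hq, hr⟩
    have hr' : r = k := (insMin k σ).injective (by rw [hr, insMin_self])
    have hp' : p = k.succAbove (σ.symm 0) :=
      (insMin k σ).injective (by rw [h1]; ext; rw [hp]; simp)
    subst hr'
    have h3 : p < r := hpq.trans hqr
    have h4 : (p : ℕ) = (σ.symm 0 : ℕ) := by
      rw [hp'] at h3 ⊢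
      rw [Fin.succAbove_lt_iff_castSucc_lt] at h3
      rw [Fin.succAbove_of_castSucc_lt _ _ h3]; simp
    have := Fin.lt_def.1 hpq
    have := Fin.lt_def.1 hqr
    omega
  · intro h
    have hk := k.2
    have h3 : k.succAbove (σ.symm 0) = (σ.symm 0).castSucc :=
      Fin.succAbove_of_castSucc_lt _ _ (Fin.lt_def.2 (by simp; omega))
    have e0 : insMin k σ k = 0 := insMin_self k σ
    refine ⟨k.succAbove (σ.symm 0), ⟨(σ.symm 0 : ℕ) + 1, by omega⟩, k, ?_, ?_, ?_, ?_, e0⟩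
    · rw [h3, Fin.lt_def]; simp
    · rw [Fin.lt_def]; exact h
    · rw [h1]; simp
    · set q : Fin (n + 2) := ⟨(σ.symm 0 : ℕ) + 1, by omega⟩ with hq
      have n0 : insMin k σ q ≠ 0 := by
        rw [← e0]
        intro hh
        have := congrArg Fin.val ((insMin k σ).injective hh)
        simp [hq] at this; omega
      have n1 : insMin k σ q ≠ 1 := by
        rw [← h1]
        intro hh
        have := congrArg Fin.val ((insMin k σ).injective hh)
        rw [h3] at this
        simp [hq] at this
      have n0' : (insMin k σ q : ℕ) ≠ 0 := fun h => n0 (Fin.ext (by simpa using h))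
      have n1' : (insMin k σ q : ℕ) ≠ 1 := fun h => n1 (Fin.ext (by simpa using h))
      simp; omega

lemma sep_insMin {n : ℕ} (k : Fin (n + 2)) (σ : Equiv.Perm (Fin (n + 1))) :
    sep (insMin k σ) = sep σ + if (σ.symm 0 : ℕ) + 1 < k then 1 else 0 := by
  unfold sep
  have himg : (Fin.succ '' {v | IsSepPair σ v}).ncard = {v | IsSepPair σ v}.ncard :=
    Set.ncard_image_of_injective _ (Fin.succ_injective _)
  have hmem : ∀ v, v ∈ {v | IsSepPair (insMin k σ) v} ↔
      v ∈ Fin.succ '' {v | IsSepPair σ v} ∨ (v = 0 ∧ (σ.symm 0 : ℕ) + 1 < k) := by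
    intro v
    refine Fin.cases ?_ (fun v => ?_) v
    · simp [isSep_zero]
    · simp [isSep_succ]
  split_ifs with h
  · have : {v | IsSepPair (insMin k σ) v} = insert 0 (Fin.succ '' {v | IsSepPair σ v}) := by
      ext v; rw [hmem]; simp only [h, and_true, Set.mem_insert_iff]; tauto
    rw [this, Set.ncard_insert_of_notMem (by simp), himg]
  · have : {v | IsSepPair (insMin k σ) v} = Fin.succ '' {v | IsSepPair σ v} := by
      ext v; rw [hmem]; simp only [h, and_false, or_false]
    rw [this, himg, add_zero]

lemma P_eq {n : ℕ} (t k : ℕ) (hk : 1 ≤ k) :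
    P (n + 1) t k = (Finset.univ.filter (fun σ : Equiv.Perm (Fin (n + 1)) =>
      sep σ = t ∧ (σ.symm 0 : ℕ) + 1 = k)).card := by
  classical
  unfold P
  rw [Nat.card_eq_fintype_card, Fintype.card_subtype]
  congr 1
  ext σ
  simp only [Finset.mem_filter, Finset.mem_univ, true_and]
  refine and_congr_right fun _ => ?_
  constructor
  · rintro ⟨h, h2⟩
    have : σ ⟨k - 1, h⟩ = 0 := Fin.ext (by simpa using h2)
    rw [← this]; simp; omega
  · intro h
    have := (σ.symm 0).2
    refine ⟨by omega, ?_⟩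
    have e : (⟨k - 1, by omega⟩ : Fin (n + 1)) = σ.symm 0 := Fin.ext (by simp; omega)
    rw [e]; simp

lemma sum_P {n : ℕ} (t a b : ℕ) (ha : 1 ≤ a) :
    ∑ j ∈ Finset.Icc a b, P (n + 1) t j =
    (Finset.univ.filter (fun σ : Equiv.Perm (Fin (n + 1)) =>
      sep σ = t ∧ a ≤ (σ.symm 0 : ℕ) + 1 ∧ (σ.symm 0 : ℕ) + 1 ≤ b)).card := by
  classical
  rw [Finset.card_eq_sum_card_fiberwise (f := fun σ => (σ.symm 0 : ℕ) + 1) (t := Finset.Icc a b)]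
  · refine Finset.sum_congr rfl fun j hj => ?_
    rw [Finset.mem_Icc] at hj
    rw [P_eq t j (by omega), Finset.filter_filter]
    congr 1
    ext σ
    simp only [Finset.mem_filter, Finset.mem_univ, true_and]
    constructor
    · rintro ⟨h1, h2⟩; exact ⟨⟨h1, by omega, by omega⟩, h2⟩
    · rintro ⟨⟨h1, _⟩, h2⟩; exact ⟨h1, h2⟩
  · intro σ hσ
    simp only [Finset.coe_filter, Finset.mem_univ, true_and, Set.mem_ofPred_eq] at hσ
    simp only [Finset.coe_Icc, Set.mem_Icc]
    exact hσ.2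

lemma P_succ {n : ℕ} (t k : ℕ) (hk1 : 1 ≤ k) (hk2 : k ≤ n + 2) :
    P (n + 2) t k = (Finset.univ.filter (fun σ : Equiv.Perm (Fin (n + 1)) =>
      sep σ + (if (σ.symm 0 : ℕ) + 2 < k then 1 else 0) = t)).card := by
  classical
  rw [P_eq t k hk1]
  symm
  let k' : Fin (n + 2) := ⟨k - 1, by omega⟩
  have hs : ∀ σ : Equiv.Perm (Fin (n + 1)), sep (insMin k' σ) =
      sep σ + (if (σ.symm 0 : ℕ) + 2 < k then 1 else 0) := by
    intro σ
    rw [sep_insMin]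
    congr 1
    have : ((σ.symm 0 : ℕ) + 1 < (k' : ℕ)) ↔ (σ.symm 0 : ℕ) + 2 < k := by
      simp only [k']; omega
    simp only [this]
  refine Finset.card_bij (fun σ _ => insMin k' σ) ?_ ?_ ?_
  · intro σ hσ
    simp only [Finset.mem_filter, Finset.mem_univ, true_and] at hσ ⊢
    refine ⟨by rw [hs, hσ], ?_⟩
    have : (insMin k' σ).symm 0 = k' := by
      rw [Equiv.symm_apply_eq, insMin_self]
    rw [this]; simp only [k']; omega
  · intro σ _ τ _ h
    exact insMin_injective _ h
  · intro π hπ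
    simp only [Finset.mem_filter, Finset.mem_univ, true_and] at hπ
    have : π k' = 0 := by
      rw [← Equiv.eq_symm_apply]
      ext; simp only [k']; omega
    obtain ⟨σ, rfl⟩ := insMin_surj k' π this
    refine ⟨σ, ?_, rfl⟩
    simp only [Finset.mem_filter, Finset.mem_univ, true_and]
    rw [← hs]; exact hπ.1

/-- The recurrence
`P(n+1, t, k) = ∑_{j=max(k-1,1)}^{n} P(n, t, j) + ∑_{j=1}^{k-2} P(n, t-1, j)`,
where the second sum is interpreted as `0` when `t = 0`. -/
theorem P_recurrence (n t k : ℕ) (hn : 1 ≤ n) (hk1 : 1 ≤ k) (hk2 : k ≤ n + 1) :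
    P (n + 1) t k =
      (∑ j ∈ Finset.Icc (max (k - 1) 1) n, P n t j) +
        (if t = 0 then 0 else ∑ j ∈ Finset.Icc 1 (k - 2), P n (t - 1) j) := by
  classical
  obtain ⟨m, rfl⟩ : ∃ m, n = m + 1 := ⟨n - 1, by omega⟩
  rw [P_succ t k hk1 hk2, sum_P _ _ _ (le_max_right _ _), sum_P _ _ _ le_rfl]
  rw [← Finset.card_filter_add_card_filter_not (fun σ => ¬ ((σ.symm 0 : ℕ) + 2 < k)),
    Finset.filter_filter, Finset.filter_filter]
  congr 1
  · congr 1
    ext σ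
    have := (σ.symm 0).2
    simp only [Finset.mem_filter, Finset.mem_univ, true_and]
    split_ifs <;> omega
  · split_ifs with ht
    · rw [Finset.card_eq_zero, Finset.filter_eq_empty_iff]
      intro σ _
      split_ifs <;> omega
    · congr 1
      ext σ
      simp only [Finset.mem_filter, Finset.mem_univ, true_and]
      split_ifs <;> omega
end
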